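/- arXiv:2305.15287 — 16 statements merged into one kernel-verified Lean document; each statement's English description precedes it below -/
import Mathlib

section
/- Let Λ = diag(λ_1, …, λ_d) with λ_1 ≥ λ_i > 0 for all i, and L(w) = (1/2)·wᵀΛw on ℝ^d. Fix η > 0 and ρ ≥ 0 with η(λ_1 + ρλ_1²) < 2. Then the USAM iterates w_{t+1} = w_t − η·∇L(w_t + ρ·∇L(w_t)) satisfy w_{t+1} = (I − ηΛ − ηρΛ²)·w_t, and setting r := max_i |1 − ηλ_i − ηρλ_i²| one has r < 1 and ‖w_t‖ ≤ r^t·‖w_0‖ for all t ≥ 0; in particular w_t converges to 0 (the global minimizer). -/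
/-!
The gradient of the quadratic loss is `Λ w`, so one USAM step multiplies the `i`-th coordinate by
`1 - η λ_i - η ρ λ_i ^ 2`. The step-size hypothesis and `0 < λ_i ≤ λ_0` put each of these factors
strictly between `-1` and `1`, so the largest modulus `r` is `< 1`, and a diagonal map contracts the
Euclidean norm by its largest modulus.
-/

/-- The quadratic loss `L(w) = (1/2) wᵀ Λ w` for `Λ = diag(lam 0, …, lam (d-1))`. -/
noncomputable def quadLoss {d : ℕ} (lam : Fin d → ℝ)
    (w : EuclideanSpace ℝ (Fin d)) : ℝ :=
  (1 / 2) * ∑ i, lam i * (w i) ^ 2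

/-- The gradient of `(1/2) wᵀ Λ w` is `Λ w`. -/
theorem gradient_quadLoss {d : ℕ} (lam : Fin d → ℝ) (x : EuclideanSpace ℝ (Fin d)) :
    gradient (quadLoss lam) x = WithLp.toLp 2 (fun i => lam i * x i) := by
  apply HasGradientAt.gradient
  rw [hasGradientAt_iff_hasFDerivAt]
  have hcoord : ∀ i, HasFDerivAt (fun w : EuclideanSpace ℝ (Fin d) => w i)
      (EuclideanSpace.proj i : EuclideanSpace ℝ (Fin d) →L[ℝ] ℝ) x :=
    fun i => (EuclideanSpace.proj i : EuclideanSpace ℝ (Fin d) →L[ℝ] ℝ).hasFDerivAt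
  have hsum := (HasFDerivAt.fun_sum (u := Finset.univ) fun i _ =>
    ((hcoord i).pow 2).const_mul (lam i)).const_mul (1 / 2 : ℝ)
  refine HasFDerivAt.congr_fderiv (f := quadLoss lam) hsum ?_
  ext v
  simp [PiLp.inner_apply, Finset.mul_sum]
  refine Finset.sum_congr rfl fun i _ => ?_
  ring

/-- A diagonal map with entries bounded by `r` in modulus scales the Euclidean norm by at most
`r`. -/
theorem norm_le_of_coord_eq_mul {ι : Type*} [Fintype ι] {x y : EuclideanSpace ℝ ι} {c : ι → ℝ}
    {r : ℝ} (hr : 0 ≤ r) (hc : ∀ i, |c i| ≤ r) (h : ∀ i, y i = c i * x i) :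
    ‖y‖ ≤ r * ‖x‖ := by
  refine (sq_le_sq₀ (norm_nonneg y) (by positivity)).mp ?_
  rw [mul_pow, EuclideanSpace.norm_sq_eq, EuclideanSpace.norm_sq_eq, Finset.mul_sum]
  refine Finset.sum_le_sum fun i _ => ?_
  rw [h i, norm_mul, mul_pow]
  gcongr
  exact hc i

/-- **USAM converges on quadratic losses when `η(λ₁ + ρλ₁²) < 2`.**
For `L(w) = (1/2) wᵀ Λ w` with `Λ = diag(λ₁, …, λ_d)`, `λ₁ ≥ λ_i > 0`, and
`η(λ₁ + ρλ₁²) < 2`, the USAM iterates `w_{t+1} = w_t − η ∇L(w_t + ρ ∇L(w_t))`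
satisfy `w_{t+1} = (I − ηΛ − ηρΛ²) w_t` coordinatewise; moreover for
`r := max_i |1 − ηλ_i − ηρλ_i²|` one has `r < 1`, `‖w_t‖ ≤ r^t ‖w_0‖`, and
`w_t → 0`. -/
theorem usam_quadratic_converges
    {d : ℕ} (lam : Fin (d + 1) → ℝ)
    (hpos : ∀ i, 0 < lam i) (hmax : ∀ i, lam i ≤ lam 0)
    (η ρ : ℝ) (hη : 0 < η) (hρ : 0 ≤ ρ)
    (hstep : η * (lam 0 + ρ * (lam 0) ^ 2) < 2)
    (w : ℕ → EuclideanSpace ℝ (Fin (d + 1)))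
    (hupd : ∀ t, w (t + 1) =
      w t - η • gradient (quadLoss lam) (w t + ρ • gradient (quadLoss lam) (w t)))
    (r : ℝ)
    (hr : r = Finset.univ.sup' Finset.univ_nonempty
      (fun i => |1 - η * lam i - η * ρ * (lam i) ^ 2|)) :
    (∀ t i, w (t + 1) i = (1 - η * lam i - η * ρ * (lam i) ^ 2) * w t i) ∧
    r < 1 ∧
    (∀ t, ‖w t‖ ≤ r ^ t * ‖w 0‖) ∧
    Filter.Tendsto w Filter.atTop (nhds 0) := by
  have hcoord : ∀ t i, w (t + 1) i = (1 - η * lam i - η * ρ * (lam i) ^ 2) * w t i := by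
    intro t i
    rw [hupd t, gradient_quadLoss, gradient_quadLoss]
    simp only [PiLp.sub_apply, PiLp.smul_apply, PiLp.add_apply, smul_eq_mul]
    ring
  have hle : ∀ i, |1 - η * lam i - η * ρ * (lam i) ^ 2| ≤ r := fun i => by
    rw [hr]
    exact Finset.le_sup' (fun i => |1 - η * lam i - η * ρ * (lam i) ^ 2|) (Finset.mem_univ i)
  have hr0 : 0 ≤ r := (abs_nonneg _).trans (hle 0)
  have hr1 : r < 1 := by
    rw [hr, Finset.sup'_lt_iff]
    intro i _
    have hi := hpos i
    -- `s ↦ s + ρ s ^ 2` is increasing on `s ≥ 0`, so the largest entry `lam 0` is the worst case.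
    have hmono : η * (lam i + ρ * (lam i) ^ 2) ≤ η * (lam 0 + ρ * (lam 0) ^ 2) := by
      have := hmax i
      gcongr
    have hgt : 0 < η * (lam i + ρ * (lam i) ^ 2) := by positivity
    rw [abs_lt]
    constructor <;> linarith
  have hnorm : ∀ t, ‖w t‖ ≤ r ^ t * ‖w 0‖ := by
    intro t
    induction t with
    | zero => simp
    | succ t ih =>
      calc ‖w (t + 1)‖ ≤ r * ‖w t‖ := norm_le_of_coord_eq_mul hr0 hle (hcoord t)
        _ ≤ r * (r ^ t * ‖w 0‖) := by gcongr
        _ = r ^ (t + 1) * ‖w 0‖ := by ring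
  refine ⟨hcoord, hr1, hnorm, squeeze_zero_norm hnorm ?_⟩
  simpa using (tendsto_pow_atTop_nhds_zero_of_lt_one hr0 hr1).mul_const ‖w 0‖
end

section
/- Let Λ = diag(λ_1, …, λ_d) with λ_1 ≥ λ_i > 0 for all i, and L(w) = (1/2)·wᵀΛw on ℝ^d. Fix η > 0 and ρ ≥ 0 with η(λ_1 + ρλ_1²) > 2, and let (w_t) be the USAM iterates w_{t+1} = w_t − η·∇L(w_t + ρ·∇L(w_t)). If the first coordinate of w_0 is nonzero, then for all t ≥ 0: ‖w_t‖ ≥ (ηλ_1 + ηρλ_1² − 1)^t · |w_{0,1}|, where ηλ_1 + ηρλ_1² − 1 > 1; consequently ‖w_t‖ → ∞, i.e., USAM diverges. -/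
theorem hasGradientAt_quadLoss {d : ℕ} (lam : Fin d → ℝ) (w : EuclideanSpace ℝ (Fin d)) :
    HasGradientAt (quadLoss lam) (WithLp.toLp 2 fun i => lam i * w i) w := by
  rw [hasGradientAt_iff_hasFDerivAt]
  have hc : ∀ i : Fin d, HasFDerivAt (fun v : EuclideanSpace ℝ (Fin d) => v i)
      (EuclideanSpace.proj i : EuclideanSpace ℝ (Fin d) →L[ℝ] ℝ) w := fun i =>
    (EuclideanSpace.proj i : EuclideanSpace ℝ (Fin d) →L[ℝ] ℝ).hasFDerivAt
  have h := (HasFDerivAt.fun_sum (u := Finset.univ) fun i _ =>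
    ((hc i).pow 2).const_mul (lam i)).const_mul (1 / 2 : ℝ)
  refine h.congr_fderiv ?_
  ext v
  simp only [InnerProductSpace.toDual_apply_apply, PiLp.inner_apply, FunLike.coe_smul,
    Pi.smul_apply, ContinuousLinearMap.sum_apply, smul_eq_mul, Finset.mul_sum]
  refine Finset.sum_congr rfl fun i _ => ?_
  simp
  ring

theorem gradient_quadLoss_apply {d : ℕ} (lam : Fin d → ℝ) (w : EuclideanSpace ℝ (Fin d))
    (i : Fin d) : gradient (quadLoss lam) w i = lam i * w i := by
  rw [(hasGradientAt_quadLoss lam w).gradient]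

/-- **USAM diverges on quadratic losses when `η(λ₁ + ρλ₁²) > 2`.**
For `L(w) = (1/2) wᵀ Λ w` with `Λ = diag(λ₁, …, λ_d)`, `λ₁ ≥ λ_i > 0`, and
`η(λ₁ + ρλ₁²) > 2`, if the first coordinate of `w_0` is nonzero then the USAM
iterates `w_{t+1} = w_t − η ∇L(w_t + ρ ∇L(w_t))` satisfy
`‖w_t‖ ≥ (ηλ₁ + ηρλ₁² − 1)^t |w_{0,1}|` with `ηλ₁ + ηρλ₁² − 1 > 1`;
consequently `‖w_t‖ → ∞`. -/
theorem usam_quadratic_diverges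
    {d : ℕ} (lam : Fin (d + 1) → ℝ)
    (hpos : ∀ i, 0 < lam i) (hmax : ∀ i, lam i ≤ lam 0)
    (η ρ : ℝ) (hη : 0 < η) (hρ : 0 ≤ ρ)
    (hstep : 2 < η * (lam 0 + ρ * (lam 0) ^ 2))
    (w : ℕ → EuclideanSpace ℝ (Fin (d + 1)))
    (hupd : ∀ t, w (t + 1) =
      w t - η • gradient (quadLoss lam) (w t + ρ • gradient (quadLoss lam) (w t)))
    (h0 : w 0 0 ≠ 0) :
    1 < η * lam 0 + η * ρ * (lam 0) ^ 2 - 1 ∧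
    (∀ t, (η * lam 0 + η * ρ * (lam 0) ^ 2 - 1) ^ t * |w 0 0| ≤ ‖w t‖) ∧
    Filter.Tendsto (fun t => ‖w t‖) Filter.atTop Filter.atTop := by
  set r := η * lam 0 + η * ρ * (lam 0) ^ 2 - 1 with hr
  have hr1 : 1 < r := by rw [hr]; linarith
  have hcoord : ∀ t, |w t 0| = r ^ t * |w 0 0| := by
    intro t
    induction t with
    | zero => simp
    | succ t ih =>
      have hs : w (t + 1) 0 = -r * w t 0 := by
        rw [hupd t]
        simp only [PiLp.sub_apply, PiLp.smul_apply, PiLp.add_apply, gradient_quadLoss_apply,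
          smul_eq_mul, hr]
        ring
      rw [hs, abs_mul, abs_neg, abs_of_pos (by linarith : 0 < r), ih]
      ring
  have hbound : ∀ t, r ^ t * |w 0 0| ≤ ‖w t‖ := fun t => by
    rw [← hcoord t, ← Real.norm_eq_abs]
    exact PiLp.norm_apply_le (w t) 0
  exact ⟨hr1, hbound, Filter.tendsto_atTop_mono hbound
    ((tendsto_pow_atTop_atTop_of_one_lt hr1).atTop_mul_const (abs_pos.mpr h0))⟩
end

section
/- Let L(x,y) = (1/2)(x·y)² on ℝ², so ∇L(x,y) = (x·y², x²·y). Let ρ > 0 and suppose x ≥ 5ρ and y ≥ 5ρ. Set z := 1/√(x² + y²), x̃ := x + ρ·y·z, ỹ := y + ρ·x·z. Then x̃·ỹ² ≤ 2·x·y² and x̃²·ỹ ≤ 2·x²·y, and consequently ⟨∇L(x,y) − (1/2)·∇L(x̃,ỹ), ∇L(x̃,ỹ)⟩ ≥ 0. -/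
/-! Since `y z ≤ 1` and `x z ≤ 1`, the ascent step moves each coordinate by at most `ρ`, which is
at most a fifth of that coordinate. Hence `xt ≤ (6 / 5) x` and `yt ≤ (6 / 5) y`, so each (cubic)
gradient component grows by a factor of at most `(6 / 5) ^ 3 < 2`. Both summands of the inner
product are then products of nonnegative factors. -/

/-- **Key inner-product inequality for the SAM descent step on the scalar factorization
loss `L(x,y) = (1/2)(xy)²`.** If `x, y ≥ 5ρ > 0` and `(x̃, ỹ)` is the SAM ascent point
`(x + ρyz, y + ρxz)` with `z = 1/√(x² + y²)`, then `x̃ỹ² ≤ 2xy²`, `x̃²ỹ ≤ 2x²y`, and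
`⟨∇L(x,y) − (1/2)∇L(x̃,ỹ), ∇L(x̃,ỹ)⟩ ≥ 0` (written out in coordinates, using
`∇L(x,y) = (xy², x²y)`). -/
theorem sam_scalar_factorization_inner_product_nonneg
    (ρ x y z xt yt : ℝ) (hρ : 0 < ρ)
    (hx : 5 * ρ ≤ x) (hy : 5 * ρ ≤ y)
    (hz : z = 1 / Real.sqrt (x ^ 2 + y ^ 2))
    (hxt : xt = x + ρ * y * z) (hyt : yt = y + ρ * x * z) :
    xt * yt ^ 2 ≤ 2 * (x * y ^ 2) ∧
    xt ^ 2 * yt ≤ 2 * (x ^ 2 * y) ∧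
    0 ≤ (x * y ^ 2 - (1 / 2) * (xt * yt ^ 2)) * (xt * yt ^ 2)
        + (x ^ 2 * y - (1 / 2) * (xt ^ 2 * yt)) * (xt ^ 2 * yt) := by
  have hx0 : 0 < x := by linarith
  have hy0 : 0 < y := by linarith
  have hs : 0 < Real.sqrt (x ^ 2 + y ^ 2) := Real.sqrt_pos.2 (by positivity)
  have hz0 : 0 < z := by rw [hz]; positivity
  have hyz : y * z ≤ 1 := by
    rw [hz, mul_one_div, div_le_one hs]
    exact Real.le_sqrt_of_sq_le (by nlinarith)
  have hxz : x * z ≤ 1 := by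
    rw [hz, mul_one_div, div_le_one hs]
    exact Real.le_sqrt_of_sq_le (by nlinarith)
  have hxt0 : 0 < xt := by rw [hxt]; positivity
  have hyt0 : 0 < yt := by rw [hyt]; positivity
  have hX : xt ≤ 6 / 5 * x := by
    rw [hxt]; nlinarith
  have hY : yt ≤ 6 / 5 * y := by
    rw [hyt]; nlinarith
  -- The slack comes from `(6 / 5) ^ 3 = 216 / 125 < 2`.
  have h1 : xt * yt ^ 2 ≤ 2 * (x * y ^ 2) := by
    have h : xt * yt ^ 2 ≤ (6 / 5 * x) * (6 / 5 * y) ^ 2 := by gcongr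
    have : 0 < x * y ^ 2 := by positivity
    linarith
  have h2 : xt ^ 2 * yt ≤ 2 * (x ^ 2 * y) := by
    have h : xt ^ 2 * yt ≤ (6 / 5 * x) ^ 2 * (6 / 5 * y) := by gcongr
    have : 0 < x ^ 2 * y := by positivity
    linarith
  refine ⟨h1, h2, add_nonneg (mul_nonneg ?_ ?_) (mul_nonneg ?_ ?_)⟩
  · linarith
  · positivity
  · linarith
  · positivity
end

section
/- Let L(x,y) = (1/2)(x·y)² on ℝ² and let η > 0, ρ > 0. Suppose x ≠ 0, |x| ≤ 5ρ and y ≥ 5ρ. Let (x', y') be the SAM update of (x,y): with z := sgn(x·y)/√(x² + y²), x' = x − η·(x + ρ·y·z)·(y + ρ·x·z)² and y' = y − η·(x + ρ·y·z)²·(y + ρ·x·z). Then y' ≤ (1 − (1/2)·η·ρ²)·y and |x'| ≤ max{5ρ, 6ηρ·(y + ρ)²}. -/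
/-! Let `s` be the common sign of `x` and `xy`, let `a = |x|` and `r = √(x² + y²)`, and put `c = y / r`
and `d = a / r`, both in `[0, 1]`. The perturbed point is `(s(a + ρc), y + ρd)`. Since
`a ≤ 5ρ ≤ y`, we have `c² ≥ 1/2`, so `(a + ρc)² (y + ρd) ≥ (ρ²/2) y`, which gives the decrease of
`y`. The updated first coordinate is `s` times `a - η (a + ρc)(y + ρd)²`, which lies between
`-6ηρ(y + ρ)²` and `5ρ`. These estimates are `sam_bounds_of_direction`.
-/

/-- The two bounds after the sign of `x` has been factored out: `a` stands for `|x|`, and `(d, c)`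
for the unit vector in the direction of `(|x|, y)`, of which only `d, c ∈ [0, 1]` and `c² ≥ 1/2`
are needed. -/
lemma sam_bounds_of_direction {η ρ a y c d : ℝ} (hη : 0 < η) (hρ : 0 < ρ) (ha0 : 0 ≤ a)
    (ha : a ≤ 5 * ρ) (hy : 0 ≤ y) (hc0 : 0 ≤ c) (hc1 : c ≤ 1) (hc : 1 / 2 ≤ c ^ 2)
    (hd0 : 0 ≤ d) (hd1 : d ≤ 1) :
    y - η * (a + ρ * c) ^ 2 * (y + ρ * d) ≤ (1 - (1 / 2) * η * ρ ^ 2) * y ∧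
    |a - η * (a + ρ * c) * (y + ρ * d) ^ 2| ≤ max (5 * ρ) (6 * η * ρ * (y + ρ) ^ 2) := by
  have hρc0 : 0 ≤ ρ * c := by positivity
  have hρd0 : 0 ≤ ρ * d := by positivity
  have hρc1 : ρ * c ≤ ρ := mul_le_of_le_one_right hρ.le hc1
  have hρd1 : ρ * d ≤ ρ := mul_le_of_le_one_right hρ.le hd1
  constructor
  · have h1 : ρ ^ 2 * (1 / 2) ≤ (a + ρ * c) ^ 2 := by
      calc ρ ^ 2 * (1 / 2) ≤ ρ ^ 2 * c ^ 2 := by gcongr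
        _ = (ρ * c) ^ 2 := by ring
        _ ≤ (a + ρ * c) ^ 2 := by gcongr; linarith
    have h2 : η * (ρ ^ 2 * (1 / 2)) * y ≤ η * (a + ρ * c) ^ 2 * (y + ρ * d) := by
      gcongr
      linarith
    linarith
  · have h1 : 0 ≤ η * (a + ρ * c) * (y + ρ * d) ^ 2 := by positivity
    have h2 : η * (a + ρ * c) * (y + ρ * d) ^ 2 ≤ η * (6 * ρ) * (y + ρ) ^ 2 := by
      gcongr
      linarith
    rw [abs_le]
    constructor
    · linarith [le_max_right (5 * ρ) (6 * η * ρ * (y + ρ) ^ 2)]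
    · linarith [le_max_left (5 * ρ) (6 * η * ρ * (y + ρ) ^ 2)]


/-- **SAM on the scalar factorization loss `L(x,y) = (1/2)(xy)²` near the `y`-axis.**
If `x ≠ 0`, `|x| ≤ 5ρ` and `y ≥ 5ρ`, then the SAM update
`x' = x − η(x + ρyz)(y + ρxz)²`, `y' = y − η(x + ρyz)²(y + ρxz)` with
`z = sgn(xy)/√(x² + y²)` satisfies `y' ≤ (1 − (1/2)ηρ²) y` and
`|x'| ≤ max {5ρ, 6ηρ(y + ρ)²}`. -/
theorem sam_scalar_factorization_y_decreases
    (η ρ x y z x' y' : ℝ) (hη : 0 < η) (hρ : 0 < ρ)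
    (hx0 : x ≠ 0) (hx : |x| ≤ 5 * ρ) (hy : 5 * ρ ≤ y)
    (hz : z = Real.sign (x * y) / Real.sqrt (x ^ 2 + y ^ 2))
    (hx' : x' = x - η * (x + ρ * y * z) * (y + ρ * x * z) ^ 2)
    (hy' : y' = y - η * (x + ρ * y * z) ^ 2 * (y + ρ * x * z)) :
    y' ≤ (1 - (1 / 2) * η * ρ ^ 2) * y ∧
    |x'| ≤ max (5 * ρ) (6 * η * ρ * (y + ρ) ^ 2) := by
  have hy0 : 0 < y := by linarith
  set r := Real.sqrt (x ^ 2 + y ^ 2) with hr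
  have hr0 : 0 < r := Real.sqrt_pos.2 (by positivity)
  have hr2 : r ^ 2 = x ^ 2 + y ^ 2 := Real.sq_sqrt (by positivity)
  have hc1 : y / r ≤ 1 := by
    rw [div_le_one hr0]
    exact Real.le_sqrt_of_sq_le (by nlinarith [sq_nonneg x])
  have hd1 : |x| / r ≤ 1 := by
    rw [div_le_one hr0]
    exact Real.abs_le_sqrt (by nlinarith [sq_nonneg y])
  have hxy : x ^ 2 ≤ y ^ 2 := sq_le_sq' (by linarith [neg_abs_le x]) (by linarith [le_abs_self x])
  have hc : 1 / 2 ≤ (y / r) ^ 2 := by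
    rw [div_pow, le_div_iff₀ (by positivity), hr2]
    linarith
  obtain ⟨h1, h2⟩ := sam_bounds_of_direction hη hρ (abs_nonneg x) hx hy0.le (by positivity) hc1 hc
    (by positivity) hd1
  rcases lt_or_gt_of_ne hx0 with hneg | hpos
  · rw [Real.sign_of_neg (mul_neg_of_neg_of_pos hneg hy0)] at hz
    rw [abs_of_neg hneg] at h1 h2
    have ey : y' = y - η * (-x + ρ * (y / r)) ^ 2 * (y + ρ * (-x / r)) := by
      rw [hy', hz]; ring
    have ex : x' = -(-x - η * (-x + ρ * (y / r)) * (y + ρ * (-x / r)) ^ 2) := by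
      rw [hx', hz]; ring
    rw [ey, ex, abs_neg]
    exact ⟨h1, h2⟩
  · rw [Real.sign_of_pos (mul_pos hpos hy0)] at hz
    rw [abs_of_pos hpos] at h1 h2
    have ey : y' = y - η * (x + ρ * (y / r)) ^ 2 * (y + ρ * (x / r)) := by
      rw [hy', hz]; ring
    have ex : x' = x - η * (x + ρ * (y / r)) * (y + ρ * (x / r)) ^ 2 := by
      rw [hx', hz]; ring
    rw [ey, ex]
    exact ⟨h1, h2⟩
end

section
/- Let L(x,y) = (1/2)(x·y)² on ℝ². Suppose 0 < x_0 < y_0 < 2x_0, η = (x_0² + y_0²)^{-1}, and ρ ≥ 15η. Let (x_t, y_t) be the USAM iterates: x_{t+1} = x_t − η·(x_t + ρ·x_t·y_t²)·(y_t + ρ·x_t²·y_t)² and y_{t+1} = y_t − η·(x_t + ρ·x_t·y_t²)²·(y_t + ρ·x_t²·y_t). Then for every t ≥ 0: |x_{t+1}| ≥ 2|x_t| and |y_{t+1}| ≥ 2|y_t|; in particular |x_t| ≥ 2^t·x_0 for all t, so USAM diverges exponentially fast. -/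
/-! Each update multiplies a coordinate by a scalar factor:
`x_{t+1} = x_t (1 - A)` with `A = η y² (1 + ρ y²) (1 + ρ x²)²`, and
`y_{t+1} = y_t (1 - B)` with `B = η x² (1 + ρ y²)² (1 + ρ x²)`.
The hypotheses on the starting point give `1/5 ≤ η x₀²` and `1/5 ≤ η y₀²`, hence also
`3 ≤ ρ x₀²` and `3 ≤ ρ y₀²`. These lower bounds persist as long as the coordinates do not
shrink, and they force `A, B ≥ 3`, so both factors have absolute value at least `2`
(`two_mul_abs_le_abs_step`) and the coordinates indeed grow. -/

/-- The common form of both coordinate updates: `a` and `b` stand for the squares of the two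
coordinates scaled by `ρ`, and `p` for the square of the other coordinate scaled by `η`. -/
lemma two_mul_abs_le_abs_step {u v p a b : ℝ} (hp : 1 / 5 ≤ p) (ha : 3 ≤ a) (hb : 3 ≤ b)
    (hv : v = u * (1 - p * (1 + a) * (1 + b) ^ 2)) : 2 * |u| ≤ |v| := by
  have h : 3 ≤ p * (1 + a) * (1 + b) ^ 2 := by
    calc (3 : ℝ) ≤ 1 / 5 * (1 + 3) * (1 + 3) ^ 2 := by norm_num
      _ ≤ p * (1 + a) * (1 + b) ^ 2 := by gcongr
  have h2 : 2 ≤ |1 - p * (1 + a) * (1 + b) ^ 2| := by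
    rw [abs_of_nonpos (by linarith)]
    linarith
  rw [hv, abs_mul, mul_comm]
  gcongr


/-- **USAM diverges exponentially fast on the scalar factorization loss
`L(x,y) = (1/2)(xy)²`.** Suppose `0 < x₀ < y₀ < 2x₀`, `η = (x₀² + y₀²)⁻¹` and
`ρ ≥ 15η`. Then the USAM iterates
`x_{t+1} = x_t − η(x_t + ρ x_t y_t²)(y_t + ρ x_t² y_t)²`,
`y_{t+1} = y_t − η(x_t + ρ x_t y_t²)²(y_t + ρ x_t² y_t)`
satisfy `|x_{t+1}| ≥ 2|x_t|` and `|y_{t+1}| ≥ 2|y_t|` for every `t ≥ 0`; in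
particular `|x_t| ≥ 2^t x₀` for all `t`. -/
theorem usam_scalar_factorization_diverges
    (x y : ℕ → ℝ) (η ρ : ℝ)
    (hx0 : 0 < x 0) (hxy0 : x 0 < y 0) (hy0 : y 0 < 2 * x 0)
    (hη : η = ((x 0) ^ 2 + (y 0) ^ 2)⁻¹) (hρ : 15 * η ≤ ρ)
    (hxupd : ∀ t, x (t + 1) =
      x t - η * (x t + ρ * x t * (y t) ^ 2) * (y t + ρ * (x t) ^ 2 * y t) ^ 2)
    (hyupd : ∀ t, y (t + 1) =
      y t - η * (x t + ρ * x t * (y t) ^ 2) ^ 2 * (y t + ρ * (x t) ^ 2 * y t)) :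
    (∀ t, 2 * |x t| ≤ |x (t + 1)| ∧ 2 * |y t| ≤ |y (t + 1)|) ∧
    (∀ t, 2 ^ t * x 0 ≤ |x t|) := by
  have hS : 0 < (x 0) ^ 2 + (y 0) ^ 2 := by positivity
  have hη0 : 0 < η := hη ▸ inv_pos.mpr hS
  have hηS : η * ((x 0) ^ 2 + (y 0) ^ 2) = 1 := hη ▸ inv_mul_cancel₀ hS.ne'
  have hpx : 1 / 5 ≤ η * (x 0) ^ 2 := by
    -- `y₀ < 2 x₀` gives `x₀² + y₀² ≤ 5 x₀²`
    have : (x 0) ^ 2 + (y 0) ^ 2 ≤ 5 * (x 0) ^ 2 := by nlinarith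
    have := mul_le_mul_of_nonneg_left this hη0.le
    linarith
  have hpy : 1 / 5 ≤ η * (y 0) ^ 2 := by
    have : (x 0) ^ 2 ≤ (y 0) ^ 2 := by gcongr
    have := mul_le_mul_of_nonneg_left this hη0.le
    linarith
  have step : ∀ t, |x 0| ≤ |x t| → |y 0| ≤ |y t| →
      2 * |x t| ≤ |x (t + 1)| ∧ 2 * |y t| ≤ |y (t + 1)| := by
    intro t hx hy
    have hpx' : 1 / 5 ≤ η * (x t) ^ 2 :=
      hpx.trans (mul_le_mul_of_nonneg_left (sq_le_sq.mpr hx) hη0.le)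
    have hpy' : 1 / 5 ≤ η * (y t) ^ 2 :=
      hpy.trans (mul_le_mul_of_nonneg_left (sq_le_sq.mpr hy) hη0.le)
    have hrx : 3 ≤ ρ * (x t) ^ 2 := by
      have := mul_le_mul_of_nonneg_right hρ (sq_nonneg (x t))
      linarith
    have hry : 3 ≤ ρ * (y t) ^ 2 := by
      have := mul_le_mul_of_nonneg_right hρ (sq_nonneg (y t))
      linarith
    exact ⟨two_mul_abs_le_abs_step hpy' hry hrx (by rw [hxupd]; ring),
      two_mul_abs_le_abs_step hpx' hrx hry (by rw [hyupd]; ring)⟩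
  have inv : ∀ t, |x 0| ≤ |x t| ∧ |y 0| ≤ |y t| := by
    intro t
    induction t with
    | zero => exact ⟨le_rfl, le_rfl⟩
    | succ t ih =>
      have := step t ih.1 ih.2
      constructor
      · linarith [abs_nonneg (x t)]
      · linarith [abs_nonneg (y t)]
  have growth : ∀ t, 2 * |x t| ≤ |x (t + 1)| ∧ 2 * |y t| ≤ |y (t + 1)| :=
    fun t => step t (inv t).1 (inv t).2
  refine ⟨growth, fun t => ?_⟩
  induction t with
  | zero => simpa using le_abs_self (x 0)
  | succ t ih =>
    rw [pow_succ]
    linarith [(growth t).1]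
end

section
/- Let L : ℝ^d → ℝ be differentiable with β-Lipschitz gradient, attaining its infimum L* := inf L, and satisfying the μ-PL inequality ‖∇L(w)‖² ≥ 2μ(L(w) − L*) for all w, with 0 < μ ≤ β. Fix 0 < η < 1/β and 0 ≤ ρ < 1/β. Then the USAM iterates w_{t+1} = w_t − η·∇L(w_t + ρ·∇L(w_t)) satisfy, for every t ≥ 0: L(w_t) − L* ≤ (1 − 2μη(1 − ρβ)(1 − (ηβ/2)(1 − ρβ)))^t · (L(w_0) − L*). -/
/-!
The quadratic upper bound for a `β`-smooth function gives
`L(w⁺) ≤ L(w) - η⟪g, h⟫ + (βη²/2)‖h‖²`, where `g = ∇L(w)` and `h = ∇L(w + ρ g)`. Completing the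
square, the last two terms equal `(‖ηβ h - g‖² - ‖g‖²) / (2β)`. Smoothness puts `h` in the ball of
radius `ρβ‖g‖` around `g`, and `ηβ < 1`, so the triangle inequality yields
`‖ηβ h - g‖ ≤ (1 - ηβ(1 - ρβ))‖g‖`. Hence one step decreases `L` by at least
`η(1 - ρβ)(1 - (ηβ/2)(1 - ρβ))‖g‖²`, and the PL inequality turns this into a contraction of
`L - L*`. The contraction factor is nonnegative because `μ ≤ β`, so the bound can be iterated.
-/

/-- The quadratic upper bound ("descent lemma") for a function with `β`-Lipschitz gradient. -/
lemma smooth_quadratic_upper_bound {E : Type*} [NormedAddCommGroup E] [InnerProductSpace ℝ E]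
    [CompleteSpace E] {L : E → ℝ} (hdiff : Differentiable ℝ L) {β : ℝ}
    (hsmooth : ∀ u v, ‖gradient L u - gradient L v‖ ≤ β * ‖u - v‖) (x v : E) :
    L (x + v) ≤ L x + inner ℝ (gradient L x) v + β / 2 * ‖v‖ ^ 2 := by
  -- The gap between `L` and its quadratic model is nonincreasing along the segment.
  let φ : ℝ → ℝ := fun s =>
    L (x + s • v) - s * inner ℝ (gradient L x) v - β / 2 * ‖v‖ ^ 2 * s ^ 2
  have hφ : ∀ s, HasDerivAt φ (inner ℝ (gradient L (x + s • v)) v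
      - inner ℝ (gradient L x) v - β * ‖v‖ ^ 2 * s) s := by
    intro s
    have h1 : HasDerivAt (fun s : ℝ => x + s • v) v s := by
      simpa using ((hasDerivAt_id s).smul_const v).const_add x
    have h2 : HasDerivAt (fun s : ℝ => L (x + s • v)) (inner ℝ (gradient L (x + s • v)) v) s := by
      have := (hdiff (x + s • v)).hasGradientAt.hasFDerivAt.comp_hasDerivAt s h1
      simpa [Function.comp_def] using this
    have h3 := (h2.sub ((hasDerivAt_id s).mul_const (inner ℝ (gradient L x) v))).sub
      ((hasDerivAt_pow 2 s).const_mul (β / 2 * ‖v‖ ^ 2))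
    refine h3.congr_deriv ?_
    norm_num
    ring
  have hanti : AntitoneOn φ (Set.Icc 0 1) := by
    refine antitoneOn_of_deriv_nonpos (convex_Icc 0 1)
      (fun s _ => (hφ s).continuousAt.continuousWithinAt)
      (fun s _ => (hφ s).differentiableAt.differentiableWithinAt) fun s hs => ?_
    rw [interior_Icc] at hs
    rw [(hφ s).deriv, ← inner_sub_left]
    have h1 := real_inner_le_norm (gradient L (x + s • v) - gradient L x) v
    have h2 := hsmooth (x + s • v) x
    rw [add_sub_cancel_left, norm_smul, Real.norm_of_nonneg hs.1.le] at h2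
    have h3 := mul_le_mul_of_nonneg_right h2 (norm_nonneg v)
    linarith
  have h := hanti (Set.left_mem_Icc.2 zero_le_one) (Set.right_mem_Icc.2 zero_le_one) zero_le_one
  simp only [φ, one_smul, zero_smul, add_zero] at h
  linarith

/-- If `h` lies within `a‖g‖` of `g`, the quadratic model at step `-η h` decreases at least as much
as for `h = (1 - a) g`, the worst case. -/
lemma model_decrease_of_perturbed_gradient {E : Type*} [NormedAddCommGroup E]
    [InnerProductSpace ℝ E] {g h : E} {a β η : ℝ} (hβ : 0 < β) (hη : 0 ≤ η) (hηβ : η * β ≤ 1)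
    (hgh : ‖h - g‖ ≤ a * ‖g‖) :
    inner ℝ g (-(η • h)) + β / 2 * ‖-(η • h)‖ ^ 2
      ≤ -(η * (1 - a) * (1 - (η * β / 2) * (1 - a)) * ‖g‖ ^ 2) := by
  have hx : 0 ≤ η * β := mul_nonneg hη hβ.le
  have h1 : ‖(η * β) • h - g‖ ≤ (1 - η * β * (1 - a)) * ‖g‖ := by
    have e : (η * β) • h - g = (η * β) • (h - g) - (1 - η * β) • g := by module
    have t := norm_sub_le ((η * β) • (h - g)) ((1 - η * β) • g)
    rw [← e, norm_smul, norm_smul, Real.norm_of_nonneg hx,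
      Real.norm_of_nonneg (sub_nonneg.2 hηβ)] at t
    have := mul_le_mul_of_nonneg_left hgh hx
    linarith
  have h2 := pow_le_pow_left₀ (norm_nonneg _) h1 2
  rw [norm_sub_sq_real, norm_smul, Real.norm_of_nonneg hx, inner_smul_left,
    real_inner_comm] at h2
  rw [inner_neg_right, inner_smul_right, norm_neg, norm_smul, Real.norm_of_nonneg hη]
  simp only [conj_trivial] at h2
  -- Clear the factor `1 / (2β)` of the completed square.
  refine le_of_mul_le_mul_left ?_ (by positivity : 0 < 2 * β)
  linarith


/-- **USAM descent lemma on smooth PL losses.**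
Let `L` be differentiable with `β`-Lipschitz gradient, attain its infimum `L*`, and
satisfy the `μ`-PL inequality `‖∇L(w)‖² ≥ 2μ(L(w) − L*)` with `0 < μ ≤ β`. For
`0 < η < 1/β` and `0 ≤ ρ < 1/β`, the USAM iterates
`w_{t+1} = w_t − η ∇L(w_t + ρ ∇L(w_t))` satisfy, for every `t`,
`L(w_t) − L* ≤ (1 − 2μη(1 − ρβ)(1 − (ηβ/2)(1 − ρβ)))^t (L(w_0) − L*)`. -/
theorem usam_pl_linear_convergence
    {d : ℕ} (L : EuclideanSpace ℝ (Fin d) → ℝ)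
    (hdiff : Differentiable ℝ L)
    (β μ : ℝ) (hμ : 0 < μ) (hμβ : μ ≤ β)
    (hsmooth : ∀ u v, ‖gradient L u - gradient L v‖ ≤ β * ‖u - v‖)
    (Lstar : ℝ) (hLstar : Lstar = ⨅ w, L w) (hattain : ∃ w, L w = Lstar)
    (hPL : ∀ w, 2 * μ * (L w - Lstar) ≤ ‖gradient L w‖ ^ 2)
    (η ρ : ℝ) (hη : 0 < η) (hηβ : η < 1 / β) (hρ : 0 ≤ ρ) (hρβ : ρ < 1 / β)
    (w : ℕ → EuclideanSpace ℝ (Fin d))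
    (hupd : ∀ t, w (t + 1) = w t - η • gradient L (w t + ρ • gradient L (w t)))
    (t : ℕ) :
    L (w t) - Lstar ≤
      (1 - 2 * μ * η * (1 - ρ * β) * (1 - (η * β / 2) * (1 - ρ * β))) ^ t
        * (L (w 0) - Lstar) := by
  have hβ : 0 < β := hμ.trans_le hμβ
  rw [lt_div_iff₀ hβ] at hηβ hρβ
  set c := η * (1 - ρ * β) * (1 - (η * β / 2) * (1 - ρ * β)) with hc
  have hrate : 1 - 2 * μ * η * (1 - ρ * β) * (1 - (η * β / 2) * (1 - ρ * β)) = 1 - 2 * μ * c := by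
    rw [hc]; ring
  rw [hrate]
  have hc0 : 0 ≤ c := by
    have h1 : 0 ≤ 1 - ρ * β := by linarith
    have h2 : η * β * (1 - ρ * β) ≤ 1 :=
      mul_le_one₀ hηβ.le h1 (by linarith [mul_nonneg hρ hβ.le])
    exact mul_nonneg (mul_nonneg hη.le h1) (by linarith)
  have hr0 : 0 ≤ 1 - 2 * μ * c := by
    -- With `x = ηβ(1 - ρβ)`, `1 - 2βc = (1 - x)²`.
    have h1 : 1 - 2 * β * c = (1 - η * β * (1 - ρ * β)) ^ 2 := by rw [hc]; ring
    have h2 := mul_le_mul_of_nonneg_right hμβ hc0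
    linarith [sq_nonneg (1 - η * β * (1 - ρ * β))]
  have step : ∀ n, L (w (n + 1)) - Lstar ≤ (1 - 2 * μ * c) * (L (w n) - Lstar) := by
    intro n
    have h1 : ‖gradient L (w n + ρ • gradient L (w n)) - gradient L (w n)‖
        ≤ ρ * β * ‖gradient L (w n)‖ := by
      have := hsmooth (w n + ρ • gradient L (w n)) (w n)
      rw [add_sub_cancel_left, norm_smul, Real.norm_of_nonneg hρ] at this
      linarith
    have h2 := model_decrease_of_perturbed_gradient hβ hη.le hηβ.le h1
    rw [← hc] at h2
    have h3 := smooth_quadratic_upper_bound hdiff hsmooth (w n)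
      (-(η • gradient L (w n + ρ • gradient L (w n))))
    rw [← sub_eq_add_neg, ← hupd] at h3
    have h4 := mul_le_mul_of_nonneg_left (hPL (w n)) hc0
    linarith
  induction t with
  | zero => simp
  | succ n ih =>
    calc L (w (n + 1)) - Lstar ≤ (1 - 2 * μ * c) * (L (w n) - Lstar) := step n
      _ ≤ (1 - 2 * μ * c) * ((1 - 2 * μ * c) ^ n * (L (w 0) - Lstar)) :=
        mul_le_mul_of_nonneg_left ih hr0
      _ = (1 - 2 * μ * c) ^ (n + 1) * (L (w 0) - Lstar) := by ring
end

section
/- Let ℓ : ℝ → ℝ satisfy the assumptions below with constant c > 0, and let (x', y') be the SAM update of (x, y) with x ≠ 0 and y ≠ 0. Then: if x > 0 then x' < x; if x < 0 then x' > x; if y > 0 then y' < y; and if y < 0 then y' > y. That is, each SAM step strictly moves both coordinates toward the coordinate axes (the set of global minima of L(x,y) = ℓ(x·y)). -/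
/-! Write `u = x + ρyz` and `v = y + ρxz` for the perturbed point. Since `z` has the sign
of `xy`, the perturbation preserves signs: `u` has the sign of `x` and `v` the sign of `y`.
Convexity and `ℓ'(0) = 0` make `ℓ'` monotone through the origin, and the lower bounds on
`|ℓ'|` exclude zeros elsewhere, so `g = ℓ'(uv)` has the sign of `uv` (`deriv_mul_self_pos`).
From `g u v > 0`, the step `g v` has the sign of `u`, hence of `x`, and symmetrically
`g u` has the sign of `y`. -/

theorem deriv_mul_self_pos {ℓ : ℝ → ℝ} {c : ℝ} (hc : 0 < c)
    (hdiff : Differentiable ℝ ℓ) (hconv : ConvexOn ℝ Set.univ ℓ)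
    (hder_ub : ∀ s, |s| ≤ c → |deriv ℓ s| ≤ |s|)
    (hder_lb : ∀ s, |s| ≤ c → |s| / 2 ≤ |deriv ℓ s|)
    (hder_tail : ∀ s, c ≤ |s| → c / 2 ≤ |deriv ℓ s|)
    {s : ℝ} (hs : s ≠ 0) : 0 < deriv ℓ s * s := by
  have hmono : MonotoneOn (deriv ℓ) Set.univ :=
    hconv.monotoneOn_deriv (fun t _ => hdiff t)
  have h0 : deriv ℓ 0 = 0 := by
    simpa using hder_ub 0 (by simpa using hc.le)
  have hne : deriv ℓ s ≠ 0 := by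
    apply abs_pos.mp
    rcases le_total |s| c with h | h
    · exact (half_pos (abs_pos.mpr hs)).trans_le (hder_lb s h)
    · exact (half_pos hc).trans_le (hder_tail s h)
  rcases hs.lt_or_gt with h | h
  · have := hmono (Set.mem_univ s) (Set.mem_univ 0) h.le
    rw [h0] at this
    exact mul_pos_of_neg_of_neg (this.lt_of_ne hne) h
  · have := hmono (Set.mem_univ 0) (Set.mem_univ s) h.le
    rw [h0] at this
    exact mul_pos (this.lt_of_ne' hne) h

theorem mul_sign_div_sqrt_nonneg (a r : ℝ) : 0 ≤ a * (Real.sign a / Real.sqrt r) := by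
  rw [← mul_div_assoc]
  refine div_nonneg ?_ (Real.sqrt_nonneg _)
  rw [mul_comm]
  exact Real.sign_mul_nonneg a

/-- If `a` and `u` have the same sign and `g u v > 0`, then the step `η g v` has the sign
of `a`. -/
theorem mul_step_pos {a u v g η : ℝ} (hη : 0 < η) (hau : 0 < a * u)
    (hg : 0 < g * (u * v)) : 0 < a * (η * g * v) := by
  have h : 0 < a * (η * g * v) * u ^ 2 := by
    have := mul_pos hη (mul_pos hau hg)
    linarith
  exact pos_of_mul_pos_left h (sq_nonneg u)


/-- **Each SAM step on `L(x,y) = ℓ(xy)` moves both coordinates strictly toward the axes.**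
Here `ℓ` is differentiable, convex, even, 1-Lipschitz, minimized at `0`, with a
constant `c > 0` such that `|ℓ'(s)| ≤ |s|` and `|ℓ'(s)| ≥ |s|/2` for `|s| ≤ c`, and
`|ℓ'(s)| ≥ c/2` for `|s| ≥ c`. The SAM update with `z = sgn(xy)/√(x² + y²)` and
`g = ℓ'((x + ρyz)(y + ρxz))` is `x' = x − ηg(y + ρxz)`, `y' = y − ηg(x + ρyz)`. -/
theorem sam_single_neuron_monotone
    (ℓ : ℝ → ℝ) (c : ℝ) (hc : 0 < c)
    (hdiff : Differentiable ℝ ℓ)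
    (hconv : ConvexOn ℝ Set.univ ℓ)
    (heven : ∀ s, ℓ (-s) = ℓ s)
    (hlip : LipschitzWith 1 ℓ)
    (hmin : ∀ s, ℓ 0 ≤ ℓ s)
    (hder_ub : ∀ s, |s| ≤ c → |deriv ℓ s| ≤ |s|)
    (hder_lb : ∀ s, |s| ≤ c → |s| / 2 ≤ |deriv ℓ s|)
    (hder_tail : ∀ s, c ≤ |s| → c / 2 ≤ |deriv ℓ s|)
    (η ρ : ℝ) (hη : 0 < η) (hρ : 0 ≤ ρ)
    (x y z g x' y' : ℝ) (hx : x ≠ 0) (hy : y ≠ 0)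
    (hz : z = Real.sign (x * y) / Real.sqrt (x ^ 2 + y ^ 2))
    (hg : g = deriv ℓ ((x + ρ * y * z) * (y + ρ * x * z)))
    (hx' : x' = x - η * g * (y + ρ * x * z))
    (hy' : y' = y - η * g * (x + ρ * y * z)) :
    (0 < x → x' < x) ∧ (x < 0 → x < x') ∧
    (0 < y → y' < y) ∧ (y < 0 → y < y') := by
  have hxyz : 0 ≤ ρ * (x * y * z) := by
    rw [hz]
    exact mul_nonneg hρ (mul_sign_div_sqrt_nonneg _ _)
  have hxu : 0 < x * (x + ρ * y * z) := by
    have := pow_pos (abs_pos.mpr hx) 2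
    rw [sq_abs] at this
    linarith
  have hyv : 0 < y * (y + ρ * x * z) := by
    have := pow_pos (abs_pos.mpr hy) 2
    rw [sq_abs] at this
    linarith
  have hgs : 0 < g * ((x + ρ * y * z) * (y + ρ * x * z)) := by
    rw [hg]
    exact deriv_mul_self_pos hc hdiff hconv hder_ub hder_lb hder_tail
      (mul_ne_zero (right_ne_zero_of_mul hxu.ne') (right_ne_zero_of_mul hyv.ne'))
  have hX := mul_step_pos hη hxu hgs
  have hY := mul_step_pos hη hyv (mul_comm (x + ρ * y * z) _ ▸ hgs)
  subst hx' hy'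
  refine ⟨fun h => ?_, fun h => ?_, fun h => ?_, fun h => ?_⟩
  · linarith [pos_of_mul_pos_right hX h.le]
  · linarith [neg_of_mul_pos_right hX h.le]
  · linarith [pos_of_mul_pos_right hY h.le]
  · linarith [neg_of_mul_pos_right hY h.le]
end

section
/- Let ℓ : ℝ → ℝ satisfy the assumptions below with constant c > 0, and let (x', y') be the USAM update of (x, y) with x ≠ 0 and y ≠ 0. Then: if x > 0 then x' < x; if x < 0 then x' > x; if y > 0 then y' < y; and if y < 0 then y' > y. That is, each USAM step strictly moves both coordinates toward the coordinate axes (the set of global minima of L(x,y) = ℓ(x·y)). -/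
/-!
The derivative `ℓ'` has the strict sign of its argument: it vanishes at the minimizer `0`, is
monotone by convexity, and the quantitative lower bounds keep it nonzero elsewhere
(`mul_deriv_pos_of_convex_min`). Hence the ascent perturbation `ρ * g * y` has the sign of `x`, so
`A = x + ρ * g * y` keeps the sign of `x`, and likewise `B = y + ρ * g * x` keeps that of `y`.
Since `h` has the sign of `A * B`, the product `h * B` has the sign of `x` and `h * A` that of `y`,
so the step decreases both absolute values or overshoots the axis, in either case moving in the
right direction.
-/

theorem mul_deriv_pos_of_convex_min {ℓ : ℝ → ℝ} (hdiff : Differentiable ℝ ℓ)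
    (hconv : ConvexOn ℝ Set.univ ℓ) (hmin : ∀ s, ℓ 0 ≤ ℓ s)
    (hne : ∀ s, s ≠ 0 → deriv ℓ s ≠ 0) {s : ℝ} (hs : s ≠ 0) : 0 < s * deriv ℓ s := by
  have h0 : deriv ℓ 0 = 0 :=
    IsLocalMin.deriv_eq_zero (Filter.Eventually.of_forall hmin)
  have hmono : MonotoneOn (deriv ℓ) Set.univ :=
    hconv.monotoneOn_deriv fun t _ => hdiff t
  rcases lt_or_gt_of_ne hs with hlt | hgt
  · have hle := hmono (Set.mem_univ s) (Set.mem_univ 0) hlt.le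
    rw [h0] at hle
    exact mul_pos_of_neg_of_neg hlt (lt_of_le_of_ne hle (hne s hs))
  · have hle := hmono (Set.mem_univ 0) (Set.mem_univ s) hgt.le
    rw [h0] at hle
    exact mul_pos hgt (lt_of_le_of_ne hle (hne s hs).symm)


/-- **Each USAM step on `L(x,y) = ℓ(xy)` moves both coordinates strictly toward the axes.**
Here `ℓ` is differentiable, convex, even, 1-Lipschitz, minimized at `0`, with a
constant `c > 0` such that `|ℓ'(s)| ≤ |s|` and `|ℓ'(s)| ≥ |s|/2` for `|s| ≤ c`, and
`|ℓ'(s)| ≥ c/2` for `|s| ≥ c`. The USAM update with `g = ℓ'(xy)` and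
`h = ℓ'((x + ρgy)(y + ρgx))` is `x' = x − ηh(y + ρgx)`, `y' = y − ηh(x + ρgy)`. -/
theorem usam_single_neuron_monotone
    (ℓ : ℝ → ℝ) (c : ℝ) (hc : 0 < c)
    (hdiff : Differentiable ℝ ℓ)
    (hconv : ConvexOn ℝ Set.univ ℓ)
    (heven : ∀ s, ℓ (-s) = ℓ s)
    (hlip : LipschitzWith 1 ℓ)
    (hmin : ∀ s, ℓ 0 ≤ ℓ s)
    (hder_ub : ∀ s, |s| ≤ c → |deriv ℓ s| ≤ |s|)
    (hder_lb : ∀ s, |s| ≤ c → |s| / 2 ≤ |deriv ℓ s|)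
    (hder_tail : ∀ s, c ≤ |s| → c / 2 ≤ |deriv ℓ s|)
    (η ρ : ℝ) (hη : 0 < η) (hρ : 0 ≤ ρ)
    (x y g h x' y' : ℝ) (hx : x ≠ 0) (hy : y ≠ 0)
    (hg : g = deriv ℓ (x * y))
    (hh : h = deriv ℓ ((x + ρ * g * y) * (y + ρ * g * x)))
    (hx' : x' = x - η * h * (y + ρ * g * x))
    (hy' : y' = y - η * h * (x + ρ * g * y)) :
    (0 < x → x' < x) ∧ (x < 0 → x < x') ∧
    (0 < y → y' < y) ∧ (y < 0 → y < y') := by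
  have hne : ∀ s, s ≠ 0 → deriv ℓ s ≠ 0 := by
    intro s hs
    apply abs_pos.mp
    rcases le_total |s| c with hsc | hsc
    · exact lt_of_lt_of_le (half_pos (abs_pos.mpr hs)) (hder_lb s hsc)
    · exact lt_of_lt_of_le (half_pos hc) (hder_tail s hsc)
  have hsign : ∀ s, s ≠ 0 → 0 < s * deriv ℓ s := fun s hs =>
    mul_deriv_pos_of_convex_min hdiff hconv hmin hne hs
  have hgpos : 0 < x * y * g := hg ▸ hsign _ (mul_ne_zero hx hy)
  have hρg : 0 ≤ ρ * (x * y * g) := mul_nonneg hρ hgpos.le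
  have hxA : 0 < x * (x + ρ * g * y) := by
    have := mul_self_pos.mpr hx
    linarith
  have hyB : 0 < y * (y + ρ * g * x) := by
    have := mul_self_pos.mpr hy
    linarith
  set A := x + ρ * g * y
  set B := y + ρ * g * x
  have hA : A ≠ 0 := right_ne_zero_of_mul hxA.ne'
  have hB : B ≠ 0 := right_ne_zero_of_mul hyB.ne'
  have hhAB : 0 < A * B * h := hh ▸ hsign _ (mul_ne_zero hA hB)
  -- Multiplying `x * A > 0` by `A * B * h > 0` leaves the square `A ^ 2`, which cancels.
  have hxs : 0 < x * (η * h * B) := by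
    have hp : 0 < A ^ 2 * (x * (η * h * B)) := by
      have := mul_pos hη (mul_pos hxA hhAB)
      linarith
    exact pos_of_mul_pos_right hp (sq_nonneg A)
  have hys : 0 < y * (η * h * A) := by
    have hp : 0 < B ^ 2 * (y * (η * h * A)) := by
      have := mul_pos hη (mul_pos hyB hhAB)
      linarith
    exact pos_of_mul_pos_right hp (sq_nonneg B)
  subst hx' hy'
  refine ⟨fun hp => ?_, fun hn => ?_, fun hp => ?_, fun hn => ?_⟩
  · linarith [pos_of_mul_pos_right hxs hp.le]
  · linarith [neg_of_mul_pos_right hxs hn.le]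
  · linarith [pos_of_mul_pos_right hys hp.le]
  · linarith [neg_of_mul_pos_right hys hn.le]
end

section
/- Let ℓ : ℝ → ℝ satisfy the assumptions below, and let (x', y') be the SAM update of (x, y) with x ≠ 0, y ≠ 0 and y² ≥ x². Then y'² − x'² ≥ (1 − 2ηρ/√(x² + y²) − η²)·(y² − x²). -/
/-!
The update scales the gap by an exact factor:
`y'² − x'² = (1 − 2ηρ·gz − η²g²(1 − ρ²z²)) (y² − x²)`.
The 1-Lipschitz bound gives `|g| ≤ 1`, and `|z| ≤ 1/√(x² + y²)`, so `gz ≤ 1/√(x² + y²)` and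
`g²(1 − ρ²z²) ≤ 1`. Since `y² − x² ≥ 0`, the bound on the factor carries over to the gap.
-/

/-- **One SAM step on `L(x,y) = ℓ(xy)` nearly preserves `y² − x²`.**
Here `ℓ` is differentiable, convex, even, 1-Lipschitz, minimized at `0`. The SAM
update with `z = sgn(xy)/√(x² + y²)` and `g = ℓ'((x + ρyz)(y + ρxz))` is
`x' = x − ηg(y + ρxz)`, `y' = y − ηg(x + ρyz)`. If `y² ≥ x²` then
`y'² − x'² ≥ (1 − 2ηρ/√(x² + y²) − η²)(y² − x²)`. -/
theorem sam_single_neuron_gap_lower_bound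
    (ℓ : ℝ → ℝ)
    (hdiff : Differentiable ℝ ℓ)
    (hconv : ConvexOn ℝ Set.univ ℓ)
    (heven : ∀ s, ℓ (-s) = ℓ s)
    (hlip : LipschitzWith 1 ℓ)
    (hmin : ∀ s, ℓ 0 ≤ ℓ s)
    (η ρ : ℝ) (hη : 0 < η) (hρ : 0 ≤ ρ)
    (x y z g x' y' : ℝ) (hx : x ≠ 0) (hy : y ≠ 0) (hxy : x ^ 2 ≤ y ^ 2)
    (hz : z = Real.sign (x * y) / Real.sqrt (x ^ 2 + y ^ 2))
    (hg : g = deriv ℓ ((x + ρ * y * z) * (y + ρ * x * z)))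
    (hx' : x' = x - η * g * (y + ρ * x * z))
    (hy' : y' = y - η * g * (x + ρ * y * z)) :
    (1 - 2 * η * ρ / Real.sqrt (x ^ 2 + y ^ 2) - η ^ 2) * (y ^ 2 - x ^ 2)
      ≤ y' ^ 2 - x' ^ 2 := by
  have hg1 : |g| ≤ 1 := by
    have h := norm_deriv_le_of_lipschitz (x₀ := (x + ρ * y * z) * (y + ρ * x * z)) hlip
    rw [← hg] at h
    simpa using h
  have hz1 : |z| ≤ 1 / √(x ^ 2 + y ^ 2) := by
    have hs : |Real.sign (x * y)| ≤ 1 := by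
      rcases Real.sign_apply_eq (x * y) with h | h | h <;> simp [h]
    rw [hz, abs_div, abs_of_nonneg (Real.sqrt_nonneg _)]
    gcongr
  have hgz : g * z ≤ 1 / √(x ^ 2 + y ^ 2) :=
    calc g * z ≤ |g| * |z| := (le_abs_self _).trans_eq (abs_mul g z)
      _ ≤ 1 * |z| := by gcongr
      _ ≤ 1 / √(x ^ 2 + y ^ 2) := by rwa [one_mul]
  have hg2 : g ^ 2 * (1 - ρ ^ 2 * z ^ 2) ≤ 1 := by
    have h1 : g ^ 2 ≤ 1 := (sq_le_one_iff_abs_le_one g).2 hg1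
    have h2 : 0 ≤ g ^ 2 * (ρ ^ 2 * z ^ 2) := by positivity
    linarith
  have hgap : y' ^ 2 - x' ^ 2 =
      (1 - 2 * η * ρ * (g * z) - η ^ 2 * (g ^ 2 * (1 - ρ ^ 2 * z ^ 2))) * (y ^ 2 - x ^ 2) := by
    rw [hx', hy']
    ring
  rw [hgap]
  refine mul_le_mul_of_nonneg_right ?_ (sub_nonneg.2 hxy)
  have h1 := mul_le_mul_of_nonneg_left hgz (by positivity : 0 ≤ 2 * η * ρ)
  have h2 := mul_le_mul_of_nonneg_left hg2 (sq_nonneg η)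
  rw [mul_one_div] at h1
  linarith
end

section
/- Let ℓ : ℝ → ℝ satisfy the assumptions below with constant c > 0, and let (x', y') be the SAM update of (x, y) with x > 0, y > 0 and x·y ≥ c. Then x' ≤ x − (c/2)·η·y. -/
/-! Since `x, y > 0`, the perturbation only enlarges both coordinates, so the gradient is evaluated
at a product that is at least `c`. There the tail bound gives `|g| ≥ c / 2`, and `g ≥ 0` because the
derivative of a convex function is monotone and vanishes at its minimizer `0`. Hence
`g * (y + ρ * x * z) ≥ (c / 2) * y`, which is the claim after scaling by `η`. -/

/-- **SAM on `L(x,y) = ℓ(xy)` decreases `x` fast away from the minima.**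
Here `ℓ` is differentiable, convex, even, 1-Lipschitz, minimized at `0`, with a
constant `c > 0` such that `|ℓ'(s)| ≤ |s|` and `|ℓ'(s)| ≥ |s|/2` for `|s| ≤ c`, and
`|ℓ'(s)| ≥ c/2` for `|s| ≥ c`. The SAM update with `z = sgn(xy)/√(x² + y²)` and
`g = ℓ'((x + ρyz)(y + ρxz))` is `x' = x − ηg(y + ρxz)`. If `x, y > 0` and
`xy ≥ c`, then `x' ≤ x − (c/2)ηy`. -/
theorem sam_single_neuron_x_decreases_fast
    (ℓ : ℝ → ℝ) (c : ℝ) (hc : 0 < c)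
    (hdiff : Differentiable ℝ ℓ)
    (hconv : ConvexOn ℝ Set.univ ℓ)
    (heven : ∀ s, ℓ (-s) = ℓ s)
    (hlip : LipschitzWith 1 ℓ)
    (hmin : ∀ s, ℓ 0 ≤ ℓ s)
    (hder_ub : ∀ s, |s| ≤ c → |deriv ℓ s| ≤ |s|)
    (hder_lb : ∀ s, |s| ≤ c → |s| / 2 ≤ |deriv ℓ s|)
    (hder_tail : ∀ s, c ≤ |s| → c / 2 ≤ |deriv ℓ s|)
    (η ρ : ℝ) (hη : 0 < η) (hρ : 0 ≤ ρ)
    (x y z g x' y' : ℝ) (hx : 0 < x) (hy : 0 < y) (hxy : c ≤ x * y)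
    (hz : z = Real.sign (x * y) / Real.sqrt (x ^ 2 + y ^ 2))
    (hg : g = deriv ℓ ((x + ρ * y * z) * (y + ρ * x * z)))
    (hx' : x' = x - η * g * (y + ρ * x * z))
    (hy' : y' = y - η * g * (x + ρ * y * z)) :
    x' ≤ x - (c / 2) * η * y := by
  have hz0 : 0 ≤ z := by
    rw [hz, Real.sign_of_pos (mul_pos hx hy)]
    positivity
  -- The ascent step moves away from the minima, so the perturbed product is still at least `c`.
  have h1 : x ≤ x + ρ * y * z := le_add_of_nonneg_right (by positivity)
  have h2 : y ≤ y + ρ * x * z := le_add_of_nonneg_right (by positivity)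
  have hs : c ≤ (x + ρ * y * z) * (y + ρ * x * z) :=
    hxy.trans (mul_le_mul h1 h2 hy.le (hx.le.trans h1))
  have hs0 := hc.le.trans hs
  -- The derivative is monotone by convexity and vanishes at the minimizer `0`.
  have hg0 : 0 ≤ g := by
    have hd0 : deriv ℓ 0 = 0 := IsLocalMin.deriv_eq_zero (Filter.Eventually.of_forall hmin)
    have hmono := hconv.monotoneOn_deriv (fun s _ => hdiff s)
      (Set.mem_univ 0) (Set.mem_univ _) hs0
    rwa [hd0, ← hg] at hmono
  have hgc : c / 2 ≤ g := by
    have h := hder_tail _ (hs.trans (le_abs_self _))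
    rwa [← hg, abs_of_nonneg hg0] at h
  have hkey : c / 2 * y ≤ g * (y + ρ * x * z) := mul_le_mul hgc h2 hy.le hg0
  have := mul_le_mul_of_nonneg_left hkey hη.le
  rw [hx']
  linarith
end

section
/- Let ℓ : ℝ → ℝ satisfy the assumptions below, and let (x', y') be the SAM update of (x, y) with x ≠ 0 and y ≠ 0. Then |x'| ≤ max{|x|, ηρ + η|y|} and |y'| ≤ max{|y|, ηρ + η|x|}. -/
/-!
Since `z` has the sign of `xy`, the perturbation moves `x` and `y` away from `0` without changing
their signs, and by at most `ρ` each. Convexity and minimality at `0` force `ℓ' s` to have the sign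
of `s` (weakly), so the step `ηg(y + ρxz)` subtracted from `x` has the sign of `x`; as `|g| ≤ 1`,
its size is at most `η(|y| + ρ)`. Two reals of the same sign differ by at most the larger of their
absolute values, which gives the bound. The claim for `y` is the same one with the coordinates
exchanged.
-/

lemma mul_deriv_nonneg_of_convex_of_min {f : ℝ → ℝ} (hdiff : Differentiable ℝ f)
    (hconv : ConvexOn ℝ Set.univ f) (hmin : ∀ s, f 0 ≤ f s) (s : ℝ) :
    0 ≤ s * deriv f s := by
  have h0 : deriv f 0 = 0 :=
    IsLocalMin.deriv_eq_zero (Filter.Eventually.of_forall hmin)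
  have hmono : MonotoneOn (deriv f) Set.univ := hconv.monotoneOn_deriv fun t _ => hdiff t
  rcases le_total 0 s with h | h
  · have := hmono (Set.mem_univ _) (Set.mem_univ _) h
    exact mul_nonneg h (by linarith)
  · have := hmono (Set.mem_univ _) (Set.mem_univ _) h
    exact mul_nonneg_of_nonpos_of_nonpos h (by linarith)

lemma abs_sub_le_max_of_mul_nonneg {x t : ℝ} (h : 0 ≤ x * t) : |x - t| ≤ max |x| |t| := by
  rcases mul_nonneg_iff.mp h with ⟨hx, ht⟩ | ⟨hx, ht⟩
  · rw [abs_of_nonneg hx, abs_of_nonneg ht, abs_le]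
    constructor
    · linarith [le_max_right x t]
    · linarith [le_max_left x t]
  · rw [abs_of_nonpos hx, abs_of_nonpos ht, abs_le]
    constructor
    · linarith [le_max_left (-x) (-t)]
    · linarith [le_max_right (-x) (-t)]

/-- The bound for one coordinate, using only the signs of `z` and `g` relative to the perturbed
point, `|g| ≤ 1`, and `|x| * |z| ≤ 1`. -/
lemma sam_coordinate_bound {η ρ x y z g : ℝ} (hη : 0 < η) (hρ : 0 ≤ ρ) (hx : x ≠ 0) (hy : y ≠ 0)
    (hz : 0 ≤ x * y * z) (hxz : |x| * |z| ≤ 1) (hg1 : |g| ≤ 1)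
    (hgs : 0 ≤ (x + ρ * y * z) * (y + ρ * x * z) * g) :
    |x - η * g * (y + ρ * x * z)| ≤ max |x| (η * ρ + η * |y|) := by
  have hxy : 0 < (x * y) ^ 2 := by positivity
  have hu : 0 < x * y * (x * (y + ρ * x * z)) := by
    have : 0 ≤ ρ * x ^ 2 * (x * y * z) := by positivity
    linarith
  have hv : 0 < x * y * (y * (x + ρ * y * z)) := by
    have : 0 ≤ ρ * y ^ 2 * (x * y * z) := by positivity
    linarith
  -- `y (x + ρyz)` has the strict sign of `xy`, so it can be cancelled from `hgs` up to that sign.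
  have hsign : 0 ≤ x * (g * (y + ρ * x * z)) := by
    have h1 : 0 ≤ (x * y * (y * (x + ρ * y * z))) * (x * (g * (y + ρ * x * z))) := by
      have : 0 ≤ (x * y) ^ 2 * ((x + ρ * y * z) * (y + ρ * x * z) * g) :=
        mul_nonneg hxy.le hgs
      linarith
    exact nonneg_of_mul_nonneg_right h1 hv
  have hsize : |g * (y + ρ * x * z)| ≤ ρ + |y| := by
    have h2 : |y + ρ * x * z| ≤ |y| + ρ * (|x| * |z|) := by
      refine (abs_add_le _ _).trans_eq ?_
      rw [abs_mul, abs_mul, abs_of_nonneg hρ, mul_assoc]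
    have h3 : ρ * (|x| * |z|) ≤ ρ * 1 := mul_le_mul_of_nonneg_left hxz hρ
    have h4 : |g| * |y + ρ * x * z| ≤ 1 * |y + ρ * x * z| :=
      mul_le_mul_of_nonneg_right hg1 (abs_nonneg _)
    rw [abs_mul]
    linarith
  have hstep : |η * g * (y + ρ * x * z)| ≤ η * ρ + η * |y| := by
    rw [mul_assoc, abs_mul, abs_of_pos hη, ← mul_add]
    exact mul_le_mul_of_nonneg_left hsize hη.le
  have h5 : 0 ≤ x * (η * g * (y + ρ * x * z)) := by
    have := mul_nonneg hη.le hsign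
    linarith
  exact (abs_sub_le_max_of_mul_nonneg h5).trans (max_le_max le_rfl hstep)


/-- **One SAM step on `L(x,y) = ℓ(xy)` cannot overshoot by much.**
Here `ℓ` is differentiable, convex, even, 1-Lipschitz, minimized at `0`, with a
constant `c > 0` such that `|ℓ'(s)| ≤ |s|` and `|ℓ'(s)| ≥ |s|/2` for `|s| ≤ c`, and
`|ℓ'(s)| ≥ c/2` for `|s| ≥ c`. The SAM update with `z = sgn(xy)/√(x² + y²)` and
`g = ℓ'((x + ρyz)(y + ρxz))` is `x' = x − ηg(y + ρxz)`, `y' = y − ηg(x + ρyz)`.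
Then `|x'| ≤ max {|x|, ηρ + η|y|}` and `|y'| ≤ max {|y|, ηρ + η|x|}`. -/
theorem sam_single_neuron_no_overshoot
    (ℓ : ℝ → ℝ) (c : ℝ) (hc : 0 < c)
    (hdiff : Differentiable ℝ ℓ)
    (hconv : ConvexOn ℝ Set.univ ℓ)
    (heven : ∀ s, ℓ (-s) = ℓ s)
    (hlip : LipschitzWith 1 ℓ)
    (hmin : ∀ s, ℓ 0 ≤ ℓ s)
    (hder_ub : ∀ s, |s| ≤ c → |deriv ℓ s| ≤ |s|)
    (hder_lb : ∀ s, |s| ≤ c → |s| / 2 ≤ |deriv ℓ s|)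
    (hder_tail : ∀ s, c ≤ |s| → c / 2 ≤ |deriv ℓ s|)
    (η ρ : ℝ) (hη : 0 < η) (hρ : 0 ≤ ρ)
    (x y z g x' y' : ℝ) (hx : x ≠ 0) (hy : y ≠ 0)
    (hz : z = Real.sign (x * y) / Real.sqrt (x ^ 2 + y ^ 2))
    (hg : g = deriv ℓ ((x + ρ * y * z) * (y + ρ * x * z)))
    (hx' : x' = x - η * g * (y + ρ * x * z))
    (hy' : y' = y - η * g * (x + ρ * y * z)) :
    |x'| ≤ max |x| (η * ρ + η * |y|) ∧
    |y'| ≤ max |y| (η * ρ + η * |x|) := by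
  have hr : 0 < Real.sqrt (x ^ 2 + y ^ 2) := by positivity
  have hz0 : 0 ≤ x * y * z := by
    rw [hz, mul_div_assoc']
    refine div_nonneg ?_ hr.le
    rw [mul_comm]
    exact Real.sign_mul_nonneg (x * y)
  have hzr : |z| * Real.sqrt (x ^ 2 + y ^ 2) ≤ 1 := by
    rw [hz, abs_div, abs_of_pos hr, div_mul_cancel₀ _ hr.ne']
    rcases Real.sign_apply_eq (x * y) with h | h | h <;> rw [h] <;> norm_num
  have hxr : |x| ≤ Real.sqrt (x ^ 2 + y ^ 2) := Real.abs_le_sqrt (by nlinarith)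
  have hyr : |y| ≤ Real.sqrt (x ^ 2 + y ^ 2) := Real.abs_le_sqrt (by nlinarith)
  have hxz : |x| * |z| ≤ 1 := by
    have := mul_le_mul_of_nonneg_left hxr (abs_nonneg z)
    linarith
  have hyz : |y| * |z| ≤ 1 := by
    have := mul_le_mul_of_nonneg_left hyr (abs_nonneg z)
    linarith
  have hg1 : |g| ≤ 1 := by
    have := norm_deriv_le_of_lipschitz hlip
      (x₀ := (x + ρ * y * z) * (y + ρ * x * z))
    rw [hg]
    simpa using this
  have hgs : 0 ≤ (x + ρ * y * z) * (y + ρ * x * z) * g := by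
    rw [hg]
    exact mul_deriv_nonneg_of_convex_of_min hdiff hconv hmin _
  constructor
  · rw [hx']
    exact sam_coordinate_bound hη hρ hx hy hz0 hxz hg1 hgs
  · rw [hy']
    exact sam_coordinate_bound hη hρ hy hx (by linarith) hyz hg1 (by linarith)
end

section
/- Let ℓ : ℝ → ℝ satisfy the assumptions below with constant c > 0, and let (x', y') be the SAM update of (x, y) with x ≠ 0 and y ≥ |x|. Then y' ≤ y − min{(1/4)·η·ρ²·y, (c/(2√2))·η·ρ}. That is, near the manifold of minima, each SAM step decreases y either by a multiplicative factor or by a constant amount proportional to ηρ. -/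
/-!
Write `σ = ±1` for the sign of `x`, `r = √(x² + y²)`, `A = |x| + ρ y / r` and `B = y + ρ |x| / r`.
Then `x + ρyz = σ A` and `y + ρxz = B`, so the gradient is evaluated at `σ A B`. As `ℓ` is convex
with minimum at `0`, `ℓ'(σ A B)` has the sign of `σ`, and the step is `y - y' = η |g| A`.
Since `y ≥ |x|`, we have `r ≤ √2 y`, hence `A ≥ ρ / √2`, while `B ≥ y`.
If `A B ≤ c`, then `|g| ≥ A B / 2` and the decrease is at least `η A² B / 2 ≥ η ρ² y / 4`;
otherwise `|g| ≥ c / 2` and the decrease is at least `η (c / 2) (ρ / √2)`.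
-/

/-- The derivative of a convex function minimized at `0` points away from `0`. -/
lemma mul_deriv_nonneg_of_convex_min {ℓ : ℝ → ℝ} (hdiff : Differentiable ℝ ℓ)
    (hconv : ConvexOn ℝ Set.univ ℓ) (hmin : ∀ s, ℓ 0 ≤ ℓ s) (s : ℝ) :
    0 ≤ s * deriv ℓ s := by
  have hmono : MonotoneOn (deriv ℓ) Set.univ :=
    hconv.monotoneOn_deriv fun t _ => hdiff t
  have h0 : deriv ℓ 0 = 0 := IsLocalMin.deriv_eq_zero (Filter.Eventually.of_forall hmin)
  rcases le_total 0 s with hs | hs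
  · have := hmono (Set.mem_univ 0) (Set.mem_univ s) hs
    exact mul_nonneg hs (by linarith)
  · have := hmono (Set.mem_univ s) (Set.mem_univ 0) hs
    exact mul_nonneg_of_nonpos_of_nonpos hs (by linarith)


/-- **SAM keeps drifting along the minima of `L(x,y) = ℓ(xy)`.**
Here `ℓ` is differentiable, convex, even, 1-Lipschitz, minimized at `0`, with a
constant `c > 0` such that `|ℓ'(s)| ≤ |s|` and `|ℓ'(s)| ≥ |s|/2` for `|s| ≤ c`, and
`|ℓ'(s)| ≥ c/2` for `|s| ≥ c`. The SAM update with `z = sgn(xy)/√(x² + y²)` and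
`g = ℓ'((x + ρyz)(y + ρxz))` is `x' = x − ηg(y + ρxz)`, `y' = y − ηg(x + ρyz)`.
If `x ≠ 0` and `y ≥ |x|`, then `y' ≤ y − min {(1/4)ηρ²y, (c/(2√2))ηρ}`. -/
theorem sam_single_neuron_drift
    (ℓ : ℝ → ℝ) (c : ℝ) (hc : 0 < c)
    (hdiff : Differentiable ℝ ℓ)
    (hconv : ConvexOn ℝ Set.univ ℓ)
    (heven : ∀ s, ℓ (-s) = ℓ s)
    (hlip : LipschitzWith 1 ℓ)
    (hmin : ∀ s, ℓ 0 ≤ ℓ s)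
    (hder_ub : ∀ s, |s| ≤ c → |deriv ℓ s| ≤ |s|)
    (hder_lb : ∀ s, |s| ≤ c → |s| / 2 ≤ |deriv ℓ s|)
    (hder_tail : ∀ s, c ≤ |s| → c / 2 ≤ |deriv ℓ s|)
    (η ρ : ℝ) (hη : 0 < η) (hρ : 0 ≤ ρ)
    (x y z g x' y' : ℝ) (hx : x ≠ 0) (hxy : |x| ≤ y)
    (hz : z = Real.sign (x * y) / Real.sqrt (x ^ 2 + y ^ 2))
    (hg : g = deriv ℓ ((x + ρ * y * z) * (y + ρ * x * z)))
    (hx' : x' = x - η * g * (y + ρ * x * z))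
    (hy' : y' = y - η * g * (x + ρ * y * z)) :
    y' ≤ y - min ((1 / 4) * η * ρ ^ 2 * y) ((c / (2 * Real.sqrt 2)) * η * ρ) := by
  have hxpos : 0 < |x| := abs_pos.mpr hx
  have hy : 0 < y := hxpos.trans_le hxy
  set r := Real.sqrt (x ^ 2 + y ^ 2) with hr
  have hrpos : 0 < r := Real.sqrt_pos.mpr (by positivity)
  obtain ⟨σ, hσ, hsign, hσx⟩ :
      ∃ σ : ℝ, |σ| = 1 ∧ Real.sign (x * y) = σ ∧ x = σ * |x| := by
    rcases lt_or_gt_of_ne hx with h | h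
    · exact ⟨-1, by simp, Real.sign_of_neg (mul_neg_of_neg_of_pos h hy), by
        rw [abs_of_neg h]; ring⟩
    · exact ⟨1, by simp, Real.sign_of_pos (mul_pos h hy), by rw [abs_of_pos h]; ring⟩
  have hσ2 : σ * σ = 1 := by rw [← abs_mul_abs_self, hσ, one_mul]
  rw [hsign] at hz
  set A := |x| + ρ * (y / r) with hA
  set B := y + ρ * (|x| / r) with hB
  have hxA : x + ρ * y * z = σ * A := by
    rw [hz, hA, mul_add, ← hσx]; ring
  have hxB : y + ρ * x * z = B := by
    calc y + ρ * x * z = y + ρ * (|x| / r) * (σ * σ) := by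
          rw [hz]; nth_rewrite 1 [hσx]; ring
      _ = B := by rw [hσ2, mul_one]
  rw [hxA, hxB] at hg
  rw [hxA] at hy'
  have hApos : 0 < A := by positivity
  have hyB : y ≤ B := by
    have : 0 ≤ ρ * (|x| / r) := by positivity
    linarith
  have hABpos : 0 < A * B := mul_pos hApos (hy.trans_le hyB)
  have hs2 : 0 < Real.sqrt 2 := by positivity
  have hrle : r ≤ Real.sqrt 2 * y := by
    rw [hr]
    refine Real.sqrt_le_iff.mpr ⟨by positivity, ?_⟩
    rw [mul_pow, Real.sq_sqrt (by norm_num)]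
    have : x ^ 2 ≤ y ^ 2 := sq_le_sq' (by linarith [neg_abs_le x]) ((le_abs_self x).trans hxy)
    linarith
  have hAρ : ρ / Real.sqrt 2 ≤ A := by
    have h1 : 1 / Real.sqrt 2 ≤ y / r := by
      rw [div_le_div_iff₀ hs2 hrpos]; linarith
    have h2 := mul_le_mul_of_nonneg_left h1 hρ
    rw [mul_one_div] at h2
    linarith
  have habs : |σ * A * B| = A * B := by
    rw [mul_assoc, abs_mul, hσ, one_mul, abs_of_pos hABpos]
  have hgσ : g * σ = |g| := by
    have h := mul_deriv_nonneg_of_convex_min hdiff hconv hmin (σ * A * B)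
    rw [← hg] at h
    have h' : 0 ≤ (A * B) * (g * σ) := by linarith
    rw [← abs_of_nonneg (nonneg_of_mul_nonneg_right h' hABpos), abs_mul, hσ, mul_one]
  have hstep : y' = y - η * (|g| * A) := by
    rw [hy', ← hgσ]; ring
  rw [hstep]
  refine sub_le_sub_left ?_ y
  rcases le_total (A * B) c with h | h
  · refine (min_le_left _ _).trans ?_
    have hgl : A * B / 2 ≤ |g| := by
      have := hder_lb (σ * A * B) (by rwa [habs])
      rwa [habs, ← hg] at this
    have hA2 : ρ ^ 2 / 2 ≤ A ^ 2 := by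
      have := pow_le_pow_left₀ (by positivity) hAρ 2
      rwa [div_pow, Real.sq_sqrt (by norm_num)] at this
    calc 1 / 4 * η * ρ ^ 2 * y = η * (ρ ^ 2 / 2 * y / 2) := by ring
      _ ≤ η * (A ^ 2 * B / 2) := by gcongr
      _ = η * (A * B / 2 * A) := by ring
      _ ≤ η * (|g| * A) := by gcongr
  · refine (min_le_right _ _).trans ?_
    have hgl : c / 2 ≤ |g| := by
      have := hder_tail (σ * A * B) (by rwa [habs])
      rwa [← hg] at this
    calc c / (2 * Real.sqrt 2) * η * ρ = η * (c / 2 * (ρ / Real.sqrt 2)) := by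
          field_simp
      _ ≤ η * (|g| * A) := by gcongr
end

section
/- Let ℓ : ℝ → ℝ satisfy the assumptions below. Fix η > 0, ρ ≥ 0, γ > 0 and C ≥ 1, and an initialization with y_0 ≥ x_0 > 0, y_0² − x_0² = γ/η and y_0² = Cγ/η. Let (x_t, y_t) be SAM iterates (each step as in the update rule below) with x_t ≠ 0 and y_t ≠ 0 for all t. Set f := 1 − 4η^{3/2}ρ/√γ − η² and assume 0 < f < 1. Then: (i) for every t with f^t ≥ 1/4, one has y_t² − x_t² ≥ f^t·(γ/η), and hence y_t² ≥ γ/(4η); (ii) if moreover ηρ + √(Cγη) ≤ (1/2)·√(γ/η) and x_s > 0 for all s ≤ t, then for every t with f^t ≥ 1/4 one has y_t ≥ (1/2)·√(γ/η). -/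
/-!
The quantity `D = y² − x²` is multiplied in one SAM step by the exact factor
`(1 − ηgρz)² − (ηg)²`. Since `|g| ≤ 1` (Lipschitz loss) and `|z| ≤ 1/√D`, this factor is at least
`1 − 2ηρ/√D − η²`, which is at least `f` as long as `D ≥ γ/(4η)`; the latter holds inductively
while `f^t ≥ 1/4` (`sam_factor_bound`, `sam_gap_bound`). This gives (i).

For (ii), part (i) gives `|y_t| ≥ ½√(γ/η)`, so only the sign of `y_t` matters. While `x, y > 0`,
convexity and minimality at `0` give `g ≥ 0`; hence `x` decreases and stays below `x₀ ≤ y₀`, and `y`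
drops in one step by at most `η(x + ρ) ≤ √(Cγη) + ηρ ≤ ½√(γ/η) ≤ y`. So `y` stays nonnegative,
and it is nonzero by hypothesis.
-/

/-- The SAM normalization factor for `L(x,y) = ℓ(xy)`: `z = sgn(xy)/√(x² + y²)`. -/
noncomputable def samZ (x y : ℝ) : ℝ :=
  Real.sign (x * y) / Real.sqrt (x ^ 2 + y ^ 2)

/-- The derivative of `ℓ` at the SAM ascent point:
`g = ℓ'((x + ρyz)(y + ρxz))` with `z = samZ x y`. -/
noncomputable def samG (ℓ : ℝ → ℝ) (ρ x y : ℝ) : ℝ :=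
  deriv ℓ ((x + ρ * y * samZ x y) * (y + ρ * x * samZ x y))

lemma samG_abs_le_one {ℓ : ℝ → ℝ} (hlip : LipschitzWith 1 ℓ) (ρ x y : ℝ) :
    |samG ℓ ρ x y| ≤ 1 := by
  have h := norm_deriv_le_of_lipschitz (x₀ := (x + ρ * y * samZ x y) * (y + ρ * x * samZ x y)) hlip
  simpa [samG] using h

lemma deriv_nonneg_of_pos {ℓ : ℝ → ℝ} (hdiff : Differentiable ℝ ℓ)
    (hconv : ConvexOn ℝ Set.univ ℓ) (hmin : ∀ s, ℓ 0 ≤ ℓ s) {s : ℝ} (hs : 0 < s) :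
    0 ≤ deriv ℓ s := by
  have h := hconv.slope_le_deriv (Set.mem_univ 0) (Set.mem_univ s) hs (hdiff s)
  refine le_trans ?_ h
  rw [slope_def_field]
  exact div_nonneg (sub_nonneg.2 (hmin s)) (by linarith)

lemma samZ_abs_le (x y : ℝ) : |samZ x y| ≤ 1 / √(x ^ 2 + y ^ 2) := by
  unfold samZ
  rw [abs_div, abs_of_nonneg (Real.sqrt_nonneg _)]
  gcongr
  rcases Real.sign_apply_eq (x * y) with h | h | h <;> rw [h] <;> norm_num

lemma samZ_of_pos {x y : ℝ} (hx : 0 < x) (hy : 0 < y) : samZ x y = 1 / √(x ^ 2 + y ^ 2) := by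
  rw [samZ, Real.sign_of_pos (mul_pos hx hy)]

/-- The one-step multiplier of `y² − x²` is at least `f` while `y² − x² ≥ γ/(4η)`. -/
lemma sam_factor_bound {η ρ γ g x y : ℝ} (hη : 0 < η) (hρ : 0 ≤ ρ) (hγ : 0 < γ)
    (hg : |g| ≤ 1) (hD : γ / (4 * η) ≤ y ^ 2 - x ^ 2) :
    1 - 4 * (η * √η) * ρ / √γ - η ^ 2 ≤
      (1 - η * g * ρ * samZ x y) ^ 2 - (η * g) ^ 2 := by
  have hz : |samZ x y| ≤ 2 * √η / √γ := by
    have hsγ : 0 < √γ := Real.sqrt_pos.2 hγ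
    have hsη : 0 < √η := Real.sqrt_pos.2 hη
    have h1 : √γ / (2 * √η) ≤ √(x ^ 2 + y ^ 2) := by
      apply Real.le_sqrt_of_sq_le
      rw [div_pow, mul_pow, Real.sq_sqrt hγ.le, Real.sq_sqrt hη.le]
      norm_num
      nlinarith [sq_nonneg x]
    calc |samZ x y| ≤ 1 / √(x ^ 2 + y ^ 2) := samZ_abs_le x y
      _ ≤ 1 / (√γ / (2 * √η)) := one_div_le_one_div_of_le (by positivity) h1
      _ = 2 * √η / √γ := one_div_div _ _
  have hgz : g * samZ x y ≤ 2 * √η / √γ := by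
    calc g * samZ x y ≤ |g * samZ x y| := le_abs_self _
      _ = |g| * |samZ x y| := abs_mul _ _
      _ ≤ 1 * |samZ x y| := by gcongr
      _ ≤ 2 * √η / √γ := by simpa using hz
  have h2 : η * ρ * (g * samZ x y) ≤ η * ρ * (2 * √η / √γ) := by gcongr
  have h3 : η * ρ * (2 * √η / √γ) * 2 = 4 * (η * √η) * ρ / √γ := by ring
  have h4 : η ^ 2 * g ^ 2 ≤ η ^ 2 := by
    have : g ^ 2 ≤ 1 := (sq_le_one_iff_abs_le_one g).2 hg
    nlinarith [sq_nonneg η]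
  nlinarith [sq_nonneg (η * g * ρ * samZ x y)]

/-- Geometric lower bound on `y² − x²` for abstract gradient values `|g t| ≤ 1`. -/
lemma sam_gap_bound {η ρ γ f : ℝ} {x y g : ℕ → ℝ} (hη : 0 < η) (hρ : 0 ≤ ρ) (hγ : 0 < γ)
    (hg : ∀ t, |g t| ≤ 1)
    (hinit1 : (y 0) ^ 2 - (x 0) ^ 2 = γ / η)
    (hxupd : ∀ t, x (t + 1) = x t - η * g t * (y t + ρ * x t * samZ (x t) (y t)))
    (hyupd : ∀ t, y (t + 1) = y t - η * g t * (x t + ρ * y t * samZ (x t) (y t)))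
    (hf : f = 1 - 4 * (η * √η) * ρ / √γ - η ^ 2) (hf0 : 0 < f) (hf1 : f < 1) (t : ℕ)
    (ht : 1 / 4 ≤ f ^ t) :
    f ^ t * (γ / η) ≤ (y t) ^ 2 - (x t) ^ 2 ∧ γ / (4 * η) ≤ (y t) ^ 2 - (x t) ^ 2 := by
  have hpos : 0 < γ / η := div_pos hγ hη
  suffices h : f ^ t * (γ / η) ≤ (y t) ^ 2 - (x t) ^ 2 by
    refine ⟨h, le_trans ?_ h⟩
    calc γ / (4 * η) = 1 / 4 * (γ / η) := by field_simp
      _ ≤ f ^ t * (γ / η) := by gcongr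
  induction t with
  | zero => simp [hinit1]
  | succ t ih =>
    have ht' : 1 / 4 ≤ f ^ t := ht.trans (pow_le_pow_of_le_one hf0.le hf1.le t.le_succ)
    have ih := ih ht'
    have hD : γ / (4 * η) ≤ (y t) ^ 2 - (x t) ^ 2 := by
      refine le_trans ?_ ih
      calc γ / (4 * η) = 1 / 4 * (γ / η) := by field_simp
        _ ≤ f ^ t * (γ / η) := by gcongr
    have hD0 : 0 ≤ (y t) ^ 2 - (x t) ^ 2 := le_trans (by positivity) hD
    have hfac := sam_factor_bound hη hρ hγ (hg t) hD
    rw [← hf] at hfac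
    calc f ^ (t + 1) * (γ / η) = f * (f ^ t * (γ / η)) := by ring
      _ ≤ f * ((y t) ^ 2 - (x t) ^ 2) := by gcongr
      _ ≤ ((1 - η * g t * ρ * samZ (x t) (y t)) ^ 2 - (η * g t) ^ 2) *
            ((y t) ^ 2 - (x t) ^ 2) := by gcongr
      _ = (y (t + 1)) ^ 2 - (x (t + 1)) ^ 2 := by rw [hxupd, hyupd]; ring

/-- **Initial phase of SAM on `L(x,y) = ℓ(xy)`: `y_t` stays large.**
Here `ℓ` is differentiable, convex, even, 1-Lipschitz, minimized at `0`, with a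
constant `c > 0` satisfying the derivative bounds below. Starting from
`y₀ ≥ x₀ > 0`, `y₀² − x₀² = γ/η`, `y₀² = Cγ/η`, the SAM iterates
`x_{t+1} = x_t − η g_t (y_t + ρ x_t z_t)`, `y_{t+1} = y_t − η g_t (x_t + ρ y_t z_t)`
satisfy, with `f := 1 − 4η^{3/2}ρ/√γ − η² ∈ (0,1)`:
(i) for every `t` with `f^t ≥ 1/4`, `y_t² − x_t² ≥ f^t (γ/η)` and `y_t² ≥ γ/(4η)`;
(ii) if moreover `ηρ + √(Cγη) ≤ (1/2)√(γ/η)`, then for every `t` such that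
`x_s > 0` for all `s ≤ t` and `f^t ≥ 1/4`, one has `y_t ≥ (1/2)√(γ/η)`. -/
theorem sam_single_neuron_initial_phase
    (ℓ : ℝ → ℝ) (c : ℝ) (hc : 0 < c)
    (hdiff : Differentiable ℝ ℓ)
    (hconv : ConvexOn ℝ Set.univ ℓ)
    (heven : ∀ s, ℓ (-s) = ℓ s)
    (hlip : LipschitzWith 1 ℓ)
    (hmin : ∀ s, ℓ 0 ≤ ℓ s)
    (hder_ub : ∀ s, |s| ≤ c → |deriv ℓ s| ≤ |s|)
    (hder_lb : ∀ s, |s| ≤ c → |s| / 2 ≤ |deriv ℓ s|)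
    (hder_tail : ∀ s, c ≤ |s| → c / 2 ≤ |deriv ℓ s|)
    (η ρ γ C : ℝ) (hη : 0 < η) (hρ : 0 ≤ ρ) (hγ : 0 < γ) (hC : 1 ≤ C)
    (x y : ℕ → ℝ)
    (hx0 : 0 < x 0) (hxy0 : x 0 ≤ y 0)
    (hinit1 : (y 0) ^ 2 - (x 0) ^ 2 = γ / η)
    (hinit2 : (y 0) ^ 2 = C * γ / η)
    (hne : ∀ t, x t ≠ 0 ∧ y t ≠ 0)
    (hxupd : ∀ t, x (t + 1) =
      x t - η * samG ℓ ρ (x t) (y t) * (y t + ρ * x t * samZ (x t) (y t)))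
    (hyupd : ∀ t, y (t + 1) =
      y t - η * samG ℓ ρ (x t) (y t) * (x t + ρ * y t * samZ (x t) (y t)))
    (f : ℝ)
    (hf : f = 1 - 4 * (η * Real.sqrt η) * ρ / Real.sqrt γ - η ^ 2)
    (hf0 : 0 < f) (hf1 : f < 1) :
    (∀ t, 1 / 4 ≤ f ^ t →
      f ^ t * (γ / η) ≤ (y t) ^ 2 - (x t) ^ 2 ∧ γ / (4 * η) ≤ (y t) ^ 2) ∧
    (η * ρ + Real.sqrt (C * γ * η) ≤ (1 / 2) * Real.sqrt (γ / η) →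
      ∀ t, (∀ s, s ≤ t → 0 < x s) → 1 / 4 ≤ f ^ t →
        (1 / 2) * Real.sqrt (γ / η) ≤ y t) := by
  have hgap := sam_gap_bound hη hρ hγ (fun t => samG_abs_le_one hlip ρ (x t) (y t)) hinit1
    hxupd hyupd hf hf0 hf1
  have hy_sq : ∀ t, 1 / 4 ≤ f ^ t → γ / (4 * η) ≤ (y t) ^ 2 := fun t ht => by
    nlinarith [(hgap t ht).2, sq_nonneg (x t)]
  refine ⟨fun t ht => ⟨(hgap t ht).1, hy_sq t ht⟩, fun hsmall t hxs ht => ?_⟩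
  have hlarge : ∀ t, 1 / 4 ≤ f ^ t → 0 < y t → 1 / 2 * √(γ / η) ≤ y t := fun t ht hy => by
    refine abs_le_of_sq_le_sq' ?_ hy.le |>.2
    rw [mul_pow, Real.sq_sqrt (by positivity)]
    calc (1 / 2) ^ 2 * (γ / η) = γ / (4 * η) := by field_simp; norm_num
      _ ≤ (y t) ^ 2 := hy_sq t ht
  suffices h : 0 < y t ∧ x t ≤ x 0 from hlarge t ht h.1
  have hηx0 : η * x 0 ≤ √(C * γ * η) := by
    apply Real.le_sqrt_of_sq_le
    have h1 : (x 0) ^ 2 ≤ C * γ / η := hinit2 ▸ by gcongr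
    calc (η * x 0) ^ 2 = η ^ 2 * (x 0) ^ 2 := by ring
      _ ≤ η ^ 2 * (C * γ / η) := by gcongr
      _ = C * γ * η := by field_simp
  induction t with
  | zero => exact ⟨hx0.trans_le hxy0, le_rfl⟩
  | succ t ih =>
    have ht' : 1 / 4 ≤ f ^ t := ht.trans (pow_le_pow_of_le_one hf0.le hf1.le t.le_succ)
    obtain ⟨hy, hx_le⟩ := ih (fun s hs => hxs s (by omega)) ht'
    have hx : 0 < x t := hxs t t.le_succ
    have hS : 0 < √((x t) ^ 2 + (y t) ^ 2) := Real.sqrt_pos.2 (by positivity)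
    have hz : 0 < samZ (x t) (y t) := by rw [samZ_of_pos hx hy]; positivity
    have hyz : y t * samZ (x t) (y t) ≤ 1 := by
      rw [samZ_of_pos hx hy, mul_one_div, div_le_one hS]
      exact Real.le_sqrt_of_sq_le (by nlinarith [sq_nonneg (x t)])
    have hg0 : 0 ≤ samG ℓ ρ (x t) (y t) :=
      deriv_nonneg_of_pos hdiff hconv hmin (by positivity)
    have hg1 : samG ℓ ρ (x t) (y t) ≤ 1 := (abs_le.1 (samG_abs_le_one hlip ρ (x t) (y t))).2
    have hdrop : η * samG ℓ ρ (x t) (y t) * (x t + ρ * y t * samZ (x t) (y t)) ≤ y t := by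
      calc η * samG ℓ ρ (x t) (y t) * (x t + ρ * y t * samZ (x t) (y t))
          ≤ η * 1 * (x t + ρ * y t * samZ (x t) (y t)) := by gcongr
        _ = η * (x t + ρ * (y t * samZ (x t) (y t))) := by ring
        _ ≤ η * (x 0 + ρ * 1) := by gcongr
        _ = η * ρ + η * x 0 := by ring
        _ ≤ η * ρ + √(C * γ * η) := by gcongr
        _ ≤ 1 / 2 * √(γ / η) := hsmall
        _ ≤ y t := hlarge t ht' hy
    refine ⟨lt_of_le_of_ne ?_ (hne (t + 1)).2.symm, ?_⟩
    · rw [hyupd]; linarith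
    · rw [hxupd]
      have : 0 ≤ η * samG ℓ ρ (x t) (y t) * (y t + ρ * x t * samZ (x t) (y t)) := by positivity
      linarith
end

section
/- Let ℓ : ℝ → ℝ be differentiable and let (x', y') be the USAM update of (x, y) with g := ℓ'(x·y) and h := ℓ'((x + ρ·g·y)(y + ρ·g·x)). Then the exact identity holds: y'² − x'² = (1 − 2ηρ·g·h − η²h²(1 − ρ²g²))·(y² − x²). If moreover ℓ is convex, even, 1-Lipschitz and minimized at 0, and y² ≥ x², then y'² − x'² ≥ (1 − η² − 2ηρ)·(y² − x²). -/
/-!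
Substituting the update gives `y' = (1 - a) y - b x` and `x' = (1 - a) x - b y` with
`a = η ρ g h` and `b = η h`, so `y'² - x'² = ((1 - a)² - b²) (y² - x²)`, which is the exact
identity. For the lower bound, the Lipschitz condition gives `|g| ≤ 1` and `|h| ≤ 1`; hence
`g h ≤ 1` and `h² (1 - ρ² g²) ≤ h² ≤ 1`, so the factor is at least `1 - η² - 2 η ρ`.
-/

/-- **Exact evolution of `y² − x²` under one USAM step on `L(x,y) = ℓ(xy)`.**
With `g = ℓ'(xy)`, `h = ℓ'((x + ρgy)(y + ρgx))`, the USAM update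
`x' = x − ηh(y + ρgx)`, `y' = y − ηh(x + ρgy)` satisfies the exact identity
`y'² − x'² = (1 − 2ηρgh − η²h²(1 − ρ²g²))(y² − x²)`. If moreover `ℓ` is convex,
even, 1-Lipschitz and minimized at `0`, and `y² ≥ x²`, then
`y'² − x'² ≥ (1 − η² − 2ηρ)(y² − x²)`. -/
theorem usam_single_neuron_gap_identity
    (ℓ : ℝ → ℝ) (hdiff : Differentiable ℝ ℓ)
    (η ρ : ℝ) (hη : 0 < η) (hρ : 0 ≤ ρ)
    (x y g h x' y' : ℝ)
    (hg : g = deriv ℓ (x * y))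
    (hh : h = deriv ℓ ((x + ρ * g * y) * (y + ρ * g * x)))
    (hx' : x' = x - η * h * (y + ρ * g * x))
    (hy' : y' = y - η * h * (x + ρ * g * y)) :
    y' ^ 2 - x' ^ 2 =
      (1 - 2 * η * ρ * g * h - η ^ 2 * h ^ 2 * (1 - ρ ^ 2 * g ^ 2))
        * (y ^ 2 - x ^ 2) ∧
    (ConvexOn ℝ Set.univ ℓ → (∀ s, ℓ (-s) = ℓ s) → LipschitzWith 1 ℓ →
      (∀ s, ℓ 0 ≤ ℓ s) → x ^ 2 ≤ y ^ 2 →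
      (1 - η ^ 2 - 2 * η * ρ) * (y ^ 2 - x ^ 2) ≤ y' ^ 2 - x' ^ 2) := by
  have key : y' ^ 2 - x' ^ 2 =
      (1 - 2 * η * ρ * g * h - η ^ 2 * h ^ 2 * (1 - ρ ^ 2 * g ^ 2))
        * (y ^ 2 - x ^ 2) := by
    rw [hx', hy']
    ring
  refine ⟨key, fun _ _ hlip _ hxy => ?_⟩
  have hd : ∀ s, |deriv ℓ s| ≤ 1 := fun s => by
    simpa using norm_deriv_le_of_lipschitz (x₀ := s) hlip
  have hg1 : |g| ≤ 1 := hg ▸ hd _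
  have hh1 : |h| ≤ 1 := hh ▸ hd _
  have hgh : g * h ≤ 1 := by
    calc g * h ≤ |g * h| := le_abs_self _
      _ = |g| * |h| := abs_mul g h
      _ ≤ 1 := mul_le_one₀ hg1 (abs_nonneg h) hh1
  have hsq : h ^ 2 ≤ 1 := (sq_le_one_iff_abs_le_one h).2 hh1
  have h₁ : η * ρ * (g * h) ≤ η * ρ * 1 := by gcongr
  have h₂ : η ^ 2 * h ^ 2 ≤ η ^ 2 * 1 := by gcongr
  have h₃ : 0 ≤ (η * h * ρ * g) ^ 2 := sq_nonneg _
  rw [key]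
  refine mul_le_mul_of_nonneg_right ?_ (sub_nonneg.2 hxy)
  linarith
end

section
/- Let ℓ : ℝ → ℝ satisfy the assumptions below. Fix η > 0 and ρ ≥ 0 with η ≤ 1 and ηρ ≤ 1, and constants C, γ > 0. If |x| ≤ √(Cγη) and |y| ≤ √(Cγ/η), then the USAM update (x', y') of (x, y) satisfies |x'| ≤ √(Cγη) and |y'| ≤ √(Cγ/η). That is, the region {|x| ≤ √(Cγη), |y| ≤ √(Cγ/η)} is invariant under USAM. -/
/-!
The derivative `ℓ'` is monotone, vanishes at the minimizer `0`, and is bounded by `1` in absolute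
value, so `ℓ'(s)` has the sign of `s`. Flipping the signs of `x` and `y` reduces everything to the
quadrant `x, y ≥ 0`, where `g, h ∈ [0, 1]`. There both coordinates can only decrease, and
since `√(Cγη) = η √(Cγ/η)` the step is too short to leave the box on the other side:
`x' = (1 - ηρgh) x - ηh y ≥ -η √(Cγ/η)` and `y' = (1 - ηρgh) y - ηh x ≥ -η √(Cγη)`.
This quadrant computation is `usam_step_nonneg`.
-/

/-- The USAM step from the closed positive quadrant, with the slopes `g, h` treated as arbitrary
numbers in `[0, 1]`; the box has half-widths `η * B` and `B`. -/
theorem usam_step_nonneg {η ρ B x y g h : ℝ} (hη : 0 < η) (hρ : 0 ≤ ρ) (hη1 : η ≤ 1)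
    (hηρ : η * ρ ≤ 1) (hx : 0 ≤ x) (hy : 0 ≤ y) (hxB : x ≤ η * B) (hyB : y ≤ B)
    (hg : 0 ≤ g) (hg1 : g ≤ 1) (hh : 0 ≤ h) (hh1 : h ≤ 1) :
    |x - η * h * (y + ρ * g * x)| ≤ η * B ∧ |y - η * h * (x + ρ * g * y)| ≤ B := by
  have hB : 0 ≤ B := hy.trans hyB
  have hgh : g * h ≤ 1 := mul_le_one₀ hg1 hh hh1
  have hk : η * ρ * (g * h) ≤ 1 := mul_le_one₀ hηρ (by positivity) hgh
  have hkx : 0 ≤ (1 - η * ρ * (g * h)) * x := mul_nonneg (by linarith) hx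
  have hky : 0 ≤ (1 - η * ρ * (g * h)) * y := mul_nonneg (by linarith) hy
  have hdx : 0 ≤ η * h * (y + ρ * g * x) := by positivity
  have hdy : 0 ≤ η * h * (x + ρ * g * y) := by positivity
  have hhy : η * (h * y) ≤ η * B :=
    mul_le_mul_of_nonneg_left ((mul_le_of_le_one_left hy hh1).trans hyB) hη.le
  have hηx : η * x ≤ B :=
    (mul_le_of_le_one_left hx hη1).trans (hxB.trans (mul_le_of_le_one_left hB hη1))
  have hhx : η * (h * x) ≤ B :=
    (mul_le_mul_of_nonneg_left (mul_le_of_le_one_left hx hh1) hη.le).trans hηx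
  refine ⟨abs_le.2 ⟨?_, ?_⟩, abs_le.2 ⟨?_, ?_⟩⟩
  · linear_combination hkx + hhy
  · linarith
  · linear_combination hky + hhx
  · linarith

/-- **USAM invariance of the region `{|x| ≤ √(Cγη), |y| ≤ √(Cγ/η)}` on `L(x,y) = ℓ(xy)`.**
Here `ℓ` is differentiable, convex, even, 1-Lipschitz, minimized at `0`, with a
constant `c > 0` satisfying the derivative bounds below. With `g = ℓ'(xy)`,
`h = ℓ'((x + ρgy)(y + ρgx))`, the USAM update is `x' = x − ηh(y + ρgx)`,
`y' = y − ηh(x + ρgy)`. If `η ≤ 1`, `ηρ ≤ 1`, `|x| ≤ √(Cγη)` and `|y| ≤ √(Cγ/η)`,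
then `|x'| ≤ √(Cγη)` and `|y'| ≤ √(Cγ/η)`. -/
theorem usam_single_neuron_region_invariant
    (ℓ : ℝ → ℝ) (c : ℝ) (hc : 0 < c)
    (hdiff : Differentiable ℝ ℓ)
    (hconv : ConvexOn ℝ Set.univ ℓ)
    (heven : ∀ s, ℓ (-s) = ℓ s)
    (hlip : LipschitzWith 1 ℓ)
    (hmin : ∀ s, ℓ 0 ≤ ℓ s)
    (hder_ub : ∀ s, |s| ≤ c → |deriv ℓ s| ≤ |s|)
    (hder_lb : ∀ s, |s| ≤ c → |s| / 2 ≤ |deriv ℓ s|)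
    (hder_tail : ∀ s, c ≤ |s| → c / 2 ≤ |deriv ℓ s|)
    (η ρ : ℝ) (hη : 0 < η) (hρ : 0 ≤ ρ)
    (hη1 : η ≤ 1) (hηρ : η * ρ ≤ 1)
    (C γ : ℝ) (hC : 0 < C) (hγ : 0 < γ)
    (x y g h x' y' : ℝ)
    (hxB : |x| ≤ Real.sqrt (C * γ * η)) (hyB : |y| ≤ Real.sqrt (C * γ / η))
    (hg : g = deriv ℓ (x * y))
    (hh : h = deriv ℓ ((x + ρ * g * y) * (y + ρ * g * x)))
    (hx' : x' = x - η * h * (y + ρ * g * x))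
    (hy' : y' = y - η * h * (x + ρ * g * y)) :
    |x'| ≤ Real.sqrt (C * γ * η) ∧ |y'| ≤ Real.sqrt (C * γ / η) := by
  have hmono : Monotone (deriv ℓ) := by
    have := hconv.monotoneOn_deriv (fun s _ => hdiff s)
    exact monotoneOn_univ.1 this
  have h0 : deriv ℓ 0 = 0 :=
    IsLocalMin.deriv_eq_zero (Filter.Eventually.of_forall hmin)
  have hpos : ∀ s, 0 ≤ s → 0 ≤ deriv ℓ s := fun s hs => h0 ▸ hmono hs
  have hneg : ∀ s, s ≤ 0 → deriv ℓ s ≤ 0 := fun s hs => h0 ▸ hmono hs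
  have hone : ∀ s, |deriv ℓ s| ≤ 1 := fun s => by
    simpa using norm_deriv_le_of_lipschitz (x₀ := s) hlip
  have hg1 := abs_le.1 (hg ▸ hone (x * y))
  have hh1 := abs_le.1 (hh ▸ hone ((x + ρ * g * y) * (y + ρ * g * x)))
  have hA : Real.sqrt (C * γ * η) = η * Real.sqrt (C * γ / η) := by
    rw [show C * γ * η = η ^ 2 * (C * γ / η) by field_simp,
      Real.sqrt_mul (sq_nonneg η), Real.sqrt_sq hη.le]
  rw [hA] at hxB ⊢
  generalize Real.sqrt (C * γ / η) = B at *
  have hxB' := abs_le.1 hxB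
  have hyB' := abs_le.1 hyB
  subst hx' hy'
  rcases le_total 0 x with hx | hx <;> rcases le_total 0 y with hy | hy
  · have hg0 : 0 ≤ g := hg ▸ hpos _ (mul_nonneg hx hy)
    have hh0 : 0 ≤ h := hh ▸ hpos _ (by positivity)
    exact usam_step_nonneg hη hρ hη1 hηρ hx hy hxB'.2 hyB'.2 hg0 hg1.2 hh0 hh1.2
  -- Flipping the sign of one coordinate flips the signs of `g` and `h`.
  · have hg0 : g ≤ 0 := hg ▸ hneg _ (mul_nonpos_of_nonneg_of_nonpos hx hy)
    have hu : 0 ≤ x + ρ * g * y := by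
      linarith [mul_nonneg hρ (mul_nonneg_of_nonpos_of_nonpos hg0 hy)]
    have hv : y + ρ * g * x ≤ 0 := by
      linarith [mul_nonneg hρ (mul_nonneg (neg_nonneg.2 hg0) hx)]
    have hh0 : h ≤ 0 := hh ▸ hneg _ (mul_nonpos_of_nonneg_of_nonpos hu hv)
    have key := usam_step_nonneg (x := x) (y := -y) (g := -g) (h := -h) (B := B) hη hρ hη1 hηρ
      hx (by linarith) hxB'.2 (by linarith) (by linarith) (by linarith) (by linarith) (by linarith)
    refine ⟨?_, ?_⟩
    · convert key.1 using 2; ring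
    · rw [← abs_neg]; convert key.2 using 2; ring
  · have hg0 : g ≤ 0 := hg ▸ hneg _ (mul_nonpos_of_nonpos_of_nonneg hx hy)
    have hu : x + ρ * g * y ≤ 0 := by
      linarith [mul_nonneg hρ (mul_nonneg (neg_nonneg.2 hg0) hy)]
    have hv : 0 ≤ y + ρ * g * x := by
      linarith [mul_nonneg hρ (mul_nonneg_of_nonpos_of_nonpos hg0 hx)]
    have hh0 : h ≤ 0 := hh ▸ hneg _ (mul_nonpos_of_nonpos_of_nonneg hu hv)
    have key := usam_step_nonneg (x := -x) (y := y) (g := -g) (h := -h) (B := B) hη hρ hη1 hηρ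
      (by linarith) hy (by linarith) hyB'.2 (by linarith) (by linarith) (by linarith) (by linarith)
    refine ⟨?_, ?_⟩
    · rw [← abs_neg]; convert key.1 using 2; ring
    · convert key.2 using 2; ring
  -- Flipping both signs leaves `g` and `h` unchanged.
  · have hg0 : 0 ≤ g := hg ▸ hpos _ (mul_nonneg_of_nonpos_of_nonpos hx hy)
    have hu : x + ρ * g * y ≤ 0 := by
      linarith [mul_nonneg (mul_nonneg hρ hg0) (neg_nonneg.2 hy)]
    have hv : y + ρ * g * x ≤ 0 := by
      linarith [mul_nonneg (mul_nonneg hρ hg0) (neg_nonneg.2 hx)]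
    have hh0 : 0 ≤ h := hh ▸ hpos _ (mul_nonneg_of_nonpos_of_nonpos hu hv)
    have key := usam_step_nonneg (x := -x) (y := -y) (g := g) (h := h) (B := B) hη hρ hη1 hηρ
      (by linarith) (by linarith) (by linarith) (by linarith) hg0 hg1.2 hh0 hh1.2
    refine ⟨?_, ?_⟩
    · rw [← abs_neg]; convert key.1 using 2; ring
    · rw [← abs_neg]; convert key.2 using 2; ring
end

section
/- Let ℓ : ℝ → ℝ satisfy the assumptions below with constant c > 0. Suppose x > 0, y ≠ 0, |x·y| ≤ c, and |(x + ρ·g·y)(y + ρ·g·x)| ≤ c, where g := ℓ'(x·y). Then the USAM update (x', y') of (x, y) satisfies the two-sided bound (1 − η(1 + ρy²)(1 + ρx²)²·y²)·x ≤ x' ≤ (1 − (η/8)(1 + ρy²)·y²)·x. In particular, if η(1 + ρy²)·y² < 2 is bounded away from 2, the x-coordinate contracts geometrically, so USAM gets trapped near the minimum (0, y). -/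
/-!
Near the minimum the derivative of `ℓ` is comparable to the identity: for `|s| ≤ c`, monotonicity
of `ℓ'` together with `ℓ' 0 = 0` fixes the sign of `ℓ' s`, so `ℓ' s = a * s` with `1/2 ≤ a ≤ 1`
(`exists_deriv_eq_mul`). Writing `g = a * (x * y)`, and `h` as `b` times its argument, the step
becomes `x - x' = η * x * y² * b * (1 + ρ * a * y²) * (1 + ρ * a * x²)²`, and both bounds
follow from `1/2 ≤ a, b ≤ 1`; the lower bound on `x - x'` even holds with `η / 4`.
-/

/-- The sign of `ℓ' s` agrees with that of `s` by convexity, so the two-sided bound on `|ℓ' s|`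
is a bound on the ratio `ℓ' s / s`. -/
theorem exists_deriv_eq_mul {ℓ : ℝ → ℝ} {c : ℝ} (hc : 0 < c)
    (hdiff : Differentiable ℝ ℓ) (hconv : ConvexOn ℝ Set.univ ℓ)
    (hder_ub : ∀ s, |s| ≤ c → |deriv ℓ s| ≤ |s|)
    (hder_lb : ∀ s, |s| ≤ c → |s| / 2 ≤ |deriv ℓ s|) {s : ℝ} (hs : |s| ≤ c) :
    ∃ a, 1 / 2 ≤ a ∧ a ≤ 1 ∧ deriv ℓ s = a * s := by
  have hmono : MonotoneOn (deriv ℓ) Set.univ := hconv.monotoneOn_deriv fun t _ => hdiff t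
  have h0 : deriv ℓ 0 = 0 := by simpa using hder_ub 0 (by simpa using hc.le)
  have hu := hder_ub s hs
  have hl := hder_lb s hs
  rcases lt_trichotomy s 0 with hneg | rfl | hpos
  · have hd : deriv ℓ s ≤ 0 := h0 ▸ hmono trivial trivial hneg.le
    rw [abs_of_nonpos hd, abs_of_neg hneg] at hu hl
    exact ⟨deriv ℓ s / s, by rw [le_div_iff_of_neg hneg]; linarith,
      by rw [div_le_iff_of_neg hneg]; linarith, (div_mul_cancel₀ _ hneg.ne).symm⟩
  · exact ⟨1, by norm_num, le_rfl, by simpa using h0⟩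
  · have hd : 0 ≤ deriv ℓ s := h0 ▸ hmono trivial trivial hpos.le
    rw [abs_of_nonneg hd, abs_of_pos hpos] at hu hl
    exact ⟨deriv ℓ s / s, by rw [le_div_iff₀ hpos]; linarith,
      by rw [div_le_iff₀ hpos]; linarith, (div_mul_cancel₀ _ hpos.ne').symm⟩


/-- **Two-sided contraction bound for the `x`-coordinate of one USAM step near the
minima of `L(x,y) = ℓ(xy)`.**
Here `ℓ` is differentiable, convex, even, 1-Lipschitz, minimized at `0`, with a
constant `c > 0` satisfying the derivative bounds below. With `g = ℓ'(xy)`,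
`h = ℓ'((x + ρgy)(y + ρgx))`, the USAM update of the `x`-coordinate is
`x' = x − ηh(y + ρgx)`. If `x > 0`, `y ≠ 0`, `|xy| ≤ c` and
`|(x + ρgy)(y + ρgx)| ≤ c`, then
`(1 − η(1 + ρy²)(1 + ρx²)² y²) x ≤ x' ≤ (1 − (η/8)(1 + ρy²) y²) x`. -/
theorem usam_single_neuron_trapped
    (ℓ : ℝ → ℝ) (c : ℝ) (hc : 0 < c)
    (hdiff : Differentiable ℝ ℓ)
    (hconv : ConvexOn ℝ Set.univ ℓ)
    (heven : ∀ s, ℓ (-s) = ℓ s)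
    (hlip : LipschitzWith 1 ℓ)
    (hmin : ∀ s, ℓ 0 ≤ ℓ s)
    (hder_ub : ∀ s, |s| ≤ c → |deriv ℓ s| ≤ |s|)
    (hder_lb : ∀ s, |s| ≤ c → |s| / 2 ≤ |deriv ℓ s|)
    (hder_tail : ∀ s, c ≤ |s| → c / 2 ≤ |deriv ℓ s|)
    (η ρ : ℝ) (hη : 0 < η) (hρ : 0 ≤ ρ)
    (x y g h x' y' : ℝ) (hx : 0 < x) (hy : y ≠ 0)
    (hg : g = deriv ℓ (x * y))
    (hh : h = deriv ℓ ((x + ρ * g * y) * (y + ρ * g * x)))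
    (hxyc : |x * y| ≤ c)
    (hargc : |(x + ρ * g * y) * (y + ρ * g * x)| ≤ c)
    (hx' : x' = x - η * h * (y + ρ * g * x))
    (hy' : y' = y - η * h * (x + ρ * g * y)) :
    (1 - η * (1 + ρ * y ^ 2) * (1 + ρ * x ^ 2) ^ 2 * y ^ 2) * x ≤ x' ∧
    x' ≤ (1 - (η / 8) * (1 + ρ * y ^ 2) * y ^ 2) * x := by
  obtain ⟨a, ha, ha1, hga⟩ := exists_deriv_eq_mul hc hdiff hconv hder_ub hder_lb hxyc
  obtain ⟨b, hb, hb1, hhb⟩ := exists_deriv_eq_mul hc hdiff hconv hder_ub hder_lb hargc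
  rw [← hg] at hga
  rw [← hh, hga] at hhb
  have ha0 : 0 ≤ a := by linarith
  have hb0 : 0 ≤ b := by linarith
  have hY : 0 ≤ ρ * y ^ 2 := by positivity
  have hX : 0 ≤ ρ * x ^ 2 := by positivity
  have hfactor : x' = x - η * x * y ^ 2 *
      (b * (1 + a * (ρ * y ^ 2)) * (1 + a * (ρ * x ^ 2)) ^ 2) := by
    rw [hx', hhb, hga]; ring
  have hk : 0 ≤ η * x * y ^ 2 := by positivity
  have hupper : b * (1 + a * (ρ * y ^ 2)) * (1 + a * (ρ * x ^ 2)) ^ 2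
      ≤ 1 * (1 + 1 * (ρ * y ^ 2)) * (1 + 1 * (ρ * x ^ 2)) ^ 2 := by
    gcongr
  -- `b ≥ 1/2` and `1 + ρy²/2 ≥ (1 + ρy²)/2` give `1/4`, and the squared factor is at least `1`.
  have hlower : 1 / 8 * (1 + ρ * y ^ 2)
      ≤ b * (1 + a * (ρ * y ^ 2)) * (1 + a * (ρ * x ^ 2)) ^ 2 := by
    calc 1 / 8 * (1 + ρ * y ^ 2) ≤ 1 / 2 * (1 + 1 / 2 * (ρ * y ^ 2)) * 1 := by linarith
      _ ≤ b * (1 + a * (ρ * y ^ 2)) * (1 + a * (ρ * x ^ 2)) ^ 2 := by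
        gcongr
        exact one_le_pow₀ (by linarith [mul_nonneg ha0 hX])
  have h1 := mul_le_mul_of_nonneg_left hupper hk
  have h2 := mul_le_mul_of_nonneg_left hlower hk
  rw [hfactor]
  constructor <;> linarith
end
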